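/- arXiv:2212.10871 — 2 statements merged into one kernel-verified Lean document; each statement's English description precedes it below -/
import Mathlib

section
/- Let (p_k)_{k≥0} be a critical offspring distribution with span 1, variance σ² ∈ (0,∞), and ∑_{k≥0} k^{2+δ} p_k < ∞ for some δ ∈ (0,1]. Then there exist a Δ-domain Δ and an analytic function Y on Δ with Y(z) = ∑_{n≥1} q_n z^n for |z| < 1 and |Y(z)| < 1 for all z ∈ Δ, such that, with implied constants uniform over z ∈ Δ: Φ(Y(z)) = 1 + O(|1−z|^{1/2}); Φ′(Y(z)) = 1 + O(|1−z|^{1/2}); Φ″(Y(z)) = σ² + O(|1−z|^{δ/2}); and for each fixed integer m ≥ 3, Φ^{(m)}(Y(z)) = O(|1−z|^{δ/2 + 1 − m/2}), where Φ^{(m)} denotes the m-th complex derivative of Φ on the open unit disc. -/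
/-- A Δ-domain: `{z : |z| < R, z ≠ 1, |arg(z−1)| > θ}`. -/
def deltaDom (R θ : ℝ) : Set ℂ :=
  {z : ℂ | ‖z‖ < R ∧ z ≠ 1 ∧ θ < |Complex.arg (z - 1)|}

/-- The offspring pgf, as a function on the complex unit disc. -/
noncomputable def pgfC (p : ℕ → ℝ) : ℂ → ℂ := fun w => ∑' k : ℕ, (p k : ℂ) * w ^ k

/-!
The equation `w = z Φ(w)` is solved in two regions, each time by Banach's fixed point theorem. Away
from `z = 1` the tree series stays in a disc `|w| ≤ x < 1`, on which `Φ` is a strict contraction,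
so its solutions persist a little beyond the unit circle. Near `z = 1`, criticality gives
`Φ(w) = w + (σ²/2) (1 - w)² + …`, so the equation is a small perturbation of
`(σ²/2) (1 - w)² = 1 - z`. For `|arg (z - 1)| > π/3` the square root of `1 - z` has argument less
than `π/3`, which puts the solution in a Stolz sector at `1`. At every solution `a` the residual
satisfies `|b - z Φ(b)| ≥ c |b - a|`, whence uniqueness and `(w/Φ(w))' ≠ 0` at `a`, and so the
solutions form an analytic function `Y`.

The construction makes both `1 - |Y|` and `|1 - Y|` of exact order `|1 - z|^(1/2)`. The asymptotics
then follow termwise from `|1 - w^j| ≤ 2 (j |1 - w|)^γ` and, for `m ≥ 3`, from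
`k^m |w|^(k - m) ≤ C k^(2 + δ) (1 - |w|)^(2 + δ - m)`.
-/

open Filter Topology Set Metric Asymptotics

lemma exists_fixedPoint_mem_closedBall {E : Type*} [MetricSpace E] [CompleteSpace E] {f : E → E}
    {K : NNReal} (hK : K < 1) {c : E} {r : ℝ} (hf : LipschitzOnWith K f (closedBall c r))
    (hc : dist (f c) c ≤ (1 - K) * r) : ∃ x ∈ closedBall c r, f x = x := by
  have hr : 0 ≤ r := nonneg_of_mul_nonneg_right (dist_nonneg.trans hc) (sub_pos.2 (mod_cast hK))
  have hmaps : MapsTo f (closedBall c r) (closedBall c r) := fun x hx => by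
    have hx' : dist (f x) (f c) ≤ K * r :=
      (hf.dist_le_mul x hx c (mem_closedBall_self hr)).trans (by gcongr; exact hx)
    have := dist_triangle (f x) (f c) c
    rw [mem_closedBall]
    linarith
  have hcontr : ContractingWith K (hmaps.restrict f _ _) := ⟨hK, hf.mapsToRestrict hmaps⟩
  obtain ⟨x, hx, hfx, -⟩ := hcontr.exists_fixedPoint' isClosed_closedBall.isComplete hmaps
    (mem_closedBall_self hr) (edist_ne_top _ _)
  exact ⟨x, hx, hfx⟩

lemma hasDerivAt_ne_zero_of_expanding {𝕜 : Type*} [NontriviallyNormedField 𝕜] {f : 𝕜 → 𝕜}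
    {f' a : 𝕜} (hf : HasDerivAt f f' a) {c : ℝ} (hc : 0 < c)
    (h : ∀ᶠ b in 𝓝 a, c * ‖b - a‖ ≤ ‖f b - f a‖) : f' ≠ 0 := by
  rintro rfl
  have hlittle := (hasDerivAt_iff_isLittleO.1 hf).def (half_pos hc)
  obtain ⟨b, ⟨hb, hb'⟩, hne⟩ := ((hlittle.and h).filter_mono nhdsWithin_le_nhds |>.and
    (self_mem_nhdsWithin : ({a}ᶜ : Set 𝕜) ∈ 𝓝[≠] a)).exists
  rw [smul_zero, sub_zero] at hb
  have : 0 < ‖b - a‖ := norm_pos_iff.2 (sub_ne_zero.2 hne)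
  nlinarith

lemma exists_sq_eq_of_neg_norm_div_two_lt_re {ζ : ℂ} (hζ : -(‖ζ‖ / 2) < ζ.re) :
    ∃ u : ℂ, u ^ 2 = ζ ∧ ‖u‖ / 2 < u.re := by
  obtain ⟨v, hv⟩ := IsAlgClosed.exists_pow_nat_eq ζ two_pos
  have hsq : (‖v‖ / 2) ^ 2 < v.re ^ 2 := by
    have hnorm : ‖ζ‖ = ‖v‖ ^ 2 := by rw [← hv, norm_pow]
    have hv_re : ζ.re = 2 * v.re ^ 2 - ‖v‖ ^ 2 := by
      rw [← hv, Complex.sq_norm, Complex.normSq_apply, pow_two v, Complex.mul_re]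
      ring
    linarith
  have habs : ‖v‖ / 2 < |v.re| := (le_abs_self _).trans_lt (sq_lt_sq.1 hsq)
  rcases lt_abs.1 habs with h | h
  · exact ⟨v, hv, h⟩
  · exact ⟨-v, by rw [neg_sq, hv], by rwa [norm_neg, Complex.neg_re]⟩

lemma eventually_norm_le_mul_of_isBigO_principal {α E : Type*} [SeminormedAddCommGroup E]
    {s : Set α} {f : α → E} {g : α → ℝ} (h : f =O[𝓟 s] g) (hg : ∀ x ∈ s, 0 ≤ g x) :
    ∀ᶠ C in atTop, ∀ x ∈ s, ‖f x‖ ≤ C * g x := by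
  filter_upwards [isBigO_iff_eventually.1 h] with C hC x hx
  have := eventually_principal.1 hC x hx
  rwa [Real.norm_of_nonneg (hg x hx)] at this

lemma isBigO_rpow_of_nonpos {α : Type*} {l : Filter α} {f g : α → ℝ} {e : ℝ} (he : e ≤ 0)
    (hf : ∀ᶠ x in l, 0 < f x) (hg : 0 ≤ᶠ[l] g) (h : f =O[l] g) :
    (fun x => g x ^ e) =O[l] fun x => f x ^ e := by
  obtain ⟨C, hC, hfg⟩ := h.exists_pos
  refine IsBigO.of_bound (C ^ (-e)) ?_
  filter_upwards [hf, hg, hfg.bound] with x hfx hgx hx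
  rw [Real.norm_of_nonneg hfx.le, Real.norm_of_nonneg hgx] at hx
  have hgx' : 0 < g x := by
    by_contra! hle
    nlinarith
  rw [Real.norm_of_nonneg (by positivity), Real.norm_of_nonneg (by positivity)]
  calc g x ^ e = C ^ (-e) * (C * g x) ^ e := by
        rw [Real.mul_rpow hC.le hgx, ← mul_assoc, ← Real.rpow_add hC, neg_add_cancel,
          Real.rpow_zero, one_mul]
    _ ≤ C ^ (-e) * f x ^ e := by
        exact mul_le_mul_of_nonneg_left (Real.rpow_le_rpow_of_nonpos hfx hx he) (by positivity)

lemma rpow_le_mul_exp {α t : ℝ} (hα : 0 ≤ α) (ht : 0 ≤ t) :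
    t ^ α ≤ (α + 1) ^ α * Real.exp t := by
  have h : t ≤ (α + 1) * Real.exp (t / (α + 1)) := by
    have := Real.add_one_le_exp (t / (α + 1))
    rw [← div_le_iff₀' (by positivity)]
    linarith
  calc t ^ α ≤ ((α + 1) * Real.exp (t / (α + 1))) ^ α := Real.rpow_le_rpow ht h hα
    _ = (α + 1) ^ α * Real.exp (t / (α + 1) * α) := by
        rw [Real.mul_rpow (by positivity) (by positivity), ← Real.exp_mul]
    _ ≤ (α + 1) ^ α * Real.exp t := by
        gcongr
        rw [div_mul_eq_mul_div, div_le_iff₀ (by positivity)]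
        nlinarith

lemma eq_of_hasSum_smul_of_norm_eq_one {ι E : Type*} [NormedAddCommGroup E]
    [InnerProductSpace ℝ E] {p : ι → ℝ} (hp : ∀ i, 0 ≤ p i) (hp1 : HasSum p 1) {u : ι → E}
    (hu : ∀ i, ‖u i‖ ≤ 1) {v : E} (hv : ‖v‖ = 1) (huv : HasSum (fun i => p i • u i) v) {i : ι}
    (hi : p i ≠ 0) : u i = v := by
  have hsum : HasSum (fun i => p i * (1 - inner ℝ (u i) v)) 0 := by
    simpa [mul_sub, hv, real_inner_smul_left, real_inner_comm, real_inner_self_eq_norm_sq]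
      using hp1.sub (huv.mapL (innerSL ℝ v))
  have hnonneg : ∀ i, 0 ≤ 1 - inner ℝ (u i) v := fun i => by
    have h := real_inner_le_norm (u i) v
    rw [hv, mul_one] at h
    linarith [hu i]
  have hinner : inner ℝ (u i) v = 1 := by
    have := congrFun ((hasSum_zero_iff_of_nonneg fun i => mul_nonneg (hp i) (hnonneg i)).1 hsum) i
    have := (mul_eq_zero.1 this).resolve_left hi
    linarith
  have hdist : ‖u i - v‖ ^ 2 ≤ 0 := by
    rw [norm_sub_sq_real, hinner, hv]
    nlinarith [hu i, norm_nonneg (u i)]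
  simpa [sub_eq_zero] using hdist.antisymm (sq_nonneg _)

lemma hasSum_of_tsum_eq_of_ne_zero {ι M : Type*} [AddCommMonoid M] [TopologicalSpace M]
    {f : ι → M} {c : M} (h : ∑' i, f i = c) (hc : c ≠ 0) : HasSum f c :=
  h ▸ (not_imp_comm.1 tsum_eq_zero_of_not_summable (h ▸ hc)).hasSum

lemma tendstoLocallyUniformlyOn_iteratedDeriv {ι : Type*} {l : Filter ι} {F : ι → ℂ → ℂ}
    {f : ℂ → ℂ} {U : Set ℂ} (hU : IsOpen U) (hF : ∀ i, DifferentiableOn ℂ (F i) U)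
    (hf : TendstoLocallyUniformlyOn F f l U) (m : ℕ) :
    TendstoLocallyUniformlyOn (fun i => iteratedDeriv m (F i)) (iteratedDeriv m f) l U := by
  induction m generalizing F f with
  | zero => simpa only [iteratedDeriv_zero] using hf
  | succ m ih =>
    simp only [iteratedDeriv_succ']
    exact ih (fun i => (hF i).deriv hU) (hf.deriv (Eventually.of_forall hF) hU)

lemma hasSum_iteratedDeriv_of_summable_norm {ι : Type*} {F : ι → ℂ → ℂ} {U : Set ℂ} {u : ι → ℝ}
    (hU : IsOpen U) (hu : Summable u) (hF : ∀ i, DifferentiableOn ℂ (F i) U)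
    (hFu : ∀ i, ∀ w ∈ U, ‖F i w‖ ≤ u i) (m : ℕ) {z : ℂ} (hz : z ∈ U) :
    HasSum (fun i => iteratedDeriv m (F i) z) (iteratedDeriv m (fun w => ∑' i, F i w) z) := by
  have h := tendstoLocallyUniformlyOn_iteratedDeriv hU
    (fun s : Finset ι => DifferentiableOn.fun_sum fun i _ => hF i)
    (tendstoUniformlyOn_tsum hu hFu).tendstoLocallyUniformlyOn m
  refine (h.tendsto_at hz).congr fun s => iteratedDeriv_fun_sum fun i _ => ?_
  exact ((hF i).contDiffOn hU).contDiffAt (hU.mem_nhds hz)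

lemma exists_differentiableOn_branch {Φ : ℂ → ℂ} {U D : Set ℂ} (hU : IsOpen U)
    (hΦ : DifferentiableOn ℂ Φ U) (h0 : Φ 0 ≠ 0) {B : ℝ} (hB : ∀ w ∈ U, ‖Φ w‖ ≤ B)
    (hD : IsOpen D) (hex : ∀ z ∈ D, ∃ w ∈ U, w = z * Φ w)
    (hres : ∀ z ∈ D, ∀ a ∈ U, a = z * Φ a → ∃ c > 0, ∀ b ∈ U, c * ‖b - a‖ ≤ ‖b - z * Φ b‖) :
    ∃ Y : ℂ → ℂ, DifferentiableOn ℂ Y D ∧ ∀ z ∈ D, Y z ∈ U ∧ Y z = z * Φ (Y z) := by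
  choose! Y hYU hY using hex
  refine ⟨Y, fun z hz => ?_, fun z hz => ⟨hYU z hz, hY z hz⟩⟩
  obtain ⟨c, hc, hres⟩ := hres z hz _ (hYU z hz) (hY z hz)
  have hne : ∀ w ∈ U, ∀ v, w = v * Φ w → Φ w ≠ 0 := fun w _ v hw h => by
    rw [h, mul_zero] at hw
    exact h0 (hw ▸ h)
  have hΦz : Φ (Y z) ≠ 0 := hne _ (hYU z hz) z (hY z hz)
  have hBpos : 0 < B := (norm_pos_iff.2 hΦz).trans_le (hB _ (hYU z hz))
  have hlip : ∀ b ∈ U, ∀ v, b = v * Φ b → c / B * ‖b - Y z‖ ≤ ‖v - z‖ := fun b hb v hbv => by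
    have hres_eq : b - z * Φ b = (v - z) * Φ b := by linear_combination hbv
    rw [div_mul_eq_mul_div, div_le_iff₀ hBpos]
    calc c * ‖b - Y z‖ ≤ ‖v - z‖ * ‖Φ b‖ := by rw [← norm_mul, ← hres_eq]; exact hres b hb
      _ ≤ ‖v - z‖ * B := by gcongr; exact hB b hb
  have hcont : ContinuousAt Y z := by
    have hO : (fun v => Y v - Y z) =O[𝓝 z] fun v => v - z := by
      refine IsBigO.of_bound (c / B)⁻¹ ?_
      filter_upwards [hD.mem_nhds hz] with v hv
      rw [inv_mul_eq_div, le_div_iff₀' (by positivity)]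
      exact hlip _ (hYU v hv) v (hY v hv)
    exact tendsto_sub_nhds_zero_iff.1 (hO.trans_tendsto (tendsto_sub_nhds_zero_iff.2 tendsto_id))
  have hder : HasDerivAt (fun w => w / Φ w) (deriv (fun w => w / Φ w) (Y z)) (Y z) :=
    (differentiableAt_id.div (hΦ.differentiableAt (hU.mem_nhds (hYU z hz))) hΦz).hasDerivAt
  have hleft : ∀ v ∈ D, Y v / Φ (Y v) = v := fun v hv =>
    (div_eq_iff (hne _ (hYU v hv) v (hY v hv))).2 (hY v hv)
  have hexp : ∀ᶠ b in 𝓝 (Y z), c / B * ‖b - Y z‖ ≤ ‖b / Φ b - Y z / Φ (Y z)‖ := by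
    have hΦc : ContinuousAt Φ (Y z) := (hΦ.differentiableAt (hU.mem_nhds (hYU z hz))).continuousAt
    filter_upwards [hU.mem_nhds (hYU z hz), hΦc.eventually_ne hΦz] with b hb hΦb
    rw [hleft z hz]
    exact hlip b hb _ (div_mul_cancel₀ _ hΦb).symm
  exact (HasDerivAt.of_local_left_inverse hcont hder
    (hasDerivAt_ne_zero_of_expanding hder (by positivity) hexp)
    (eventually_of_mem (hD.mem_nhds hz) hleft)).differentiableAt.differentiableWithinAt

/-! ### Solutions near a parabolic fixed point -/

/-- The Stolz sector at `1`: the points at distance less than `t` from `1` that are seen from `1`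
within the angle `arccos (1/4)` of the inward normal of the unit disc. -/
def stolzSector (t : ℝ) : Set ℂ := {w : ℂ | ‖1 - w‖ < t ∧ ‖1 - w‖ < 4 * (1 - w).re}

lemma isOpen_stolzSector (t : ℝ) : IsOpen (stolzSector t) := by
  have h : Continuous fun w : ℂ => 1 - w := by fun_prop
  exact (isOpen_lt h.norm continuous_const).inter
    (isOpen_lt h.norm (continuous_const.mul (Complex.continuous_re.comp h)))

section StolzSector

variable {t : ℝ} {w : ℂ}

lemma norm_one_sub_pos_of_mem_stolzSector (hw : w ∈ stolzSector t) : 0 < ‖1 - w‖ := by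
  refine norm_pos_iff.2 fun h => ?_
  simpa [h] using hw.2

lemma norm_one_sub_div_eight_le_of_mem_stolzSector (ht : t ≤ 1 / 32) (hw : w ∈ stolzSector t) :
    ‖1 - w‖ / 8 ≤ 1 - ‖w‖ := by
  have hsq : ‖w‖ ^ 2 = 1 - 2 * (1 - w).re + ‖1 - w‖ ^ 2 := by
    simp only [Complex.sq_norm, Complex.normSq_apply, Complex.sub_re, Complex.sub_im,
      Complex.one_re, Complex.one_im]
    ring
  have hle : ‖w‖ ^ 2 ≤ (1 - ‖1 - w‖ / 8) ^ 2 := by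
    nlinarith [hw.1, hw.2, norm_nonneg (1 - w)]
  linarith [abs_le_of_sq_le_sq' hle (by linarith [hw.1])]

lemma norm_lt_one_of_mem_stolzSector (ht : t ≤ 1 / 32) (hw : w ∈ stolzSector t) : ‖w‖ < 1 := by
  linarith [norm_one_sub_div_eight_le_of_mem_stolzSector ht hw,
    norm_one_sub_pos_of_mem_stolzSector hw]

lemma one_sub_mem_stolzSector_of_mem_closedBall {u v : ℂ} (hu : ‖u‖ / 2 < u.re)
    (hut : ‖u‖ < t / 2) (hv : v ∈ closedBall u (‖u‖ / 8)) :
    ‖v‖ ≤ 9 / 8 * ‖u‖ ∧ 1 - v ∈ stolzSector t := by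
  have hdist : ‖v - u‖ ≤ ‖u‖ / 8 := mem_closedBall_iff_norm.1 hv
  have hnorm := norm_le_norm_add_norm_sub' v u
  have hre := (abs_le.1 (Complex.abs_re_le_norm (v - u))).1
  rw [Complex.sub_re] at hre
  refine ⟨by linarith, ?_, ?_⟩ <;> rw [sub_sub_cancel] <;> linarith [norm_nonneg u]

end StolzSector

lemma exists_sq_add_eq_sq {u : ℂ} (hu : u ≠ 0) {N : ℂ → ℂ}
    (hN : LipschitzOnWith (‖u‖₊ / 2) N (closedBall u (‖u‖ / 8))) (hNu : ‖N u‖ ≤ ‖u‖ ^ 2 / 8) :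
    ∃ v ∈ closedBall u (‖u‖ / 8), v ^ 2 + N v = u ^ 2 := by
  have hupos : 0 < ‖u‖ := norm_pos_iff.2 hu
  have h2u : ‖2 * u‖ = 2 * ‖u‖ := by rw [norm_mul, Complex.norm_ofNat]
  let T : ℂ → ℂ := fun v => v - (v ^ 2 + N v - u ^ 2) / (2 * u)
  have hT : LipschitzOnWith 2⁻¹ T (closedBall u (‖u‖ / 8)) := by
    refine lipschitzOnWith_iff_norm_sub_le.2 fun v hv w hw => ?_
    have hdiff : T v - T w = ((u - v + (u - w)) * (v - w) - (N v - N w)) / (2 * u) := by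
      simp only [T]
      field
    have hv' : ‖u - v‖ ≤ ‖u‖ / 8 := mem_closedBall_iff_norm'.1 hv
    have hw' : ‖u - w‖ ≤ ‖u‖ / 8 := mem_closedBall_iff_norm'.1 hw
    have hlin : ‖(u - v + (u - w)) * (v - w)‖ ≤ ‖u‖ / 4 * ‖v - w‖ := by
      rw [norm_mul]
      gcongr
      linarith [norm_add_le (u - v) (u - w)]
    have hNvw : ‖N v - N w‖ ≤ ‖u‖ / 2 * ‖v - w‖ := lipschitzOnWith_iff_norm_sub_le.1 hN hv hw
    rw [hdiff, norm_div, h2u, div_le_iff₀ (by positivity), NNReal.coe_inv, NNReal.coe_ofNat]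
    have := norm_sub_le ((u - v + (u - w)) * (v - w)) (N v - N w)
    nlinarith [norm_nonneg (v - w)]
  have hTu : dist (T u) u ≤ (1 - (2⁻¹ : NNReal)) * (‖u‖ / 8) := by
    rw [dist_eq_norm, NNReal.coe_inv, NNReal.coe_ofNat]
    simp only [T, add_sub_cancel_left, sub_sub_cancel_left, norm_neg, norm_div, h2u]
    rw [div_le_iff₀ (by positivity)]
    linarith
  obtain ⟨v, hv, hfix⟩ := exists_fixedPoint_mem_closedBall
    (inv_lt_one_of_one_lt₀ one_lt_two) hT hTu
  refine ⟨v, hv, ?_⟩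
  have := (div_eq_zero_iff.1 (sub_eq_self.1 hfix)).resolve_right (by simpa using hu)
  exact sub_eq_zero.1 this

/-- `Φ` is nonexpansive on the closed unit disc and has a parabolic fixed point at `1`: `Φ(w) - w`
is `β (1 - w)²` up to an error whose Lipschitz constant at distance `M ≤ t` from `1` is small
compared to `β M`. The constants `1/32` and `1/16` are merely small enough. -/
structure IsParabolicAtOne (Φ : ℂ → ℂ) (β t : ℝ) : Prop where
  curvature_pos : 0 < β
  radius_pos : 0 < t
  radius_le : t ≤ 1 / 32
  map_one : Φ 1 = 1
  norm_sub_le : ∀ a b : ℂ, ‖a‖ ≤ 1 → ‖b‖ ≤ 1 → ‖Φ a - Φ b‖ ≤ ‖a - b‖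
  norm_remainder_sub_le : ∀ M ≤ t, ∀ a b : ℂ, ‖a‖ ≤ 1 → ‖b‖ ≤ 1 → ‖1 - a‖ ≤ M → ‖1 - b‖ ≤ M →
    ‖(Φ a - a - β * (1 - a) ^ 2) - (Φ b - b - β * (1 - b) ^ 2)‖ ≤ β / 16 * M * ‖a - b‖

/-- The perturbation of the quadratic equation `β (1 - w)² = 1 - z` that turns it into
`w = z Φ(w)`. -/
def quadraticDefect (Φ : ℂ → ℂ) (β : ℝ) (z w : ℂ) : ℂ :=
  (Φ w - w - β * (1 - w) ^ 2) + (1 - z) * (1 - Φ w)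

lemma sub_mul_eq_sub_quadraticDefect (Φ : ℂ → ℂ) (β : ℝ) (z w : ℂ) :
    w - z * Φ w = 1 - z - (β * (1 - w) ^ 2 + quadraticDefect Φ β z w) := by
  rw [quadraticDefect]
  ring

namespace IsParabolicAtOne

variable {Φ : ℂ → ℂ} {β t M : ℝ} {z a b w : ℂ}

lemma norm_quadraticDefect_sub_le (h : IsParabolicAtOne Φ β t) (hM : M ≤ t)
    (ha : ‖a‖ ≤ 1) (hb : ‖b‖ ≤ 1) (haM : ‖1 - a‖ ≤ M) (hbM : ‖1 - b‖ ≤ M) :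
    ‖quadraticDefect Φ β z a - quadraticDefect Φ β z b‖ ≤ (β / 16 * M + ‖1 - z‖) * ‖a - b‖ := by
  have hdiff : quadraticDefect Φ β z a - quadraticDefect Φ β z b =
      ((Φ a - a - β * (1 - a) ^ 2) - (Φ b - b - β * (1 - b) ^ 2)) - (1 - z) * (Φ a - Φ b) := by
    simp only [quadraticDefect]
    ring
  rw [hdiff, add_mul]
  refine norm_sub_le_of_le (h.norm_remainder_sub_le M hM a b ha hb haM hbM) ?_
  rw [norm_mul]
  gcongr
  exact h.norm_sub_le a b ha hb

lemma norm_quadraticDefect_le (h : IsParabolicAtOne Φ β t) (ha : ‖a‖ ≤ 1) (hat : ‖1 - a‖ ≤ t) :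
    ‖quadraticDefect Φ β z a‖ ≤ (β / 16 * ‖1 - a‖ + ‖1 - z‖) * ‖1 - a‖ := by
  have h1 : quadraticDefect Φ β z 1 = 0 := by simp [quadraticDefect, h.map_one]
  have := h.norm_quadraticDefect_sub_le (z := z) hat ha norm_one.le le_rfl
    (by rw [sub_self, norm_zero]; exact norm_nonneg _)
  rwa [h1, sub_zero, norm_sub_rev a] at this

lemma norm_one_sub_le_and_le (h : IsParabolicAtOne Φ β t) (hw : w ∈ stolzSector t)
    (hwz : w = z * Φ w) :
    β / 2 * ‖1 - w‖ ^ 2 ≤ ‖1 - z‖ ∧ ‖1 - z‖ ≤ 2 * β * ‖1 - w‖ ^ 2 := by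
  have hwt := h.radius_le
  have hβ := h.curvature_pos
  have hdefect := h.norm_quadraticDefect_le (z := z) (norm_lt_one_of_mem_stolzSector hwt hw).le
    hw.1.le
  have hquad : ‖(β : ℂ) * (1 - w) ^ 2‖ = β * ‖1 - w‖ ^ 2 := by
    rw [norm_mul, norm_pow, Complex.norm_real, Real.norm_of_nonneg hβ.le]
  have heq : 1 - z = β * (1 - w) ^ 2 + quadraticDefect Φ β z w := by
    rw [← sub_eq_zero, ← sub_mul_eq_sub_quadraticDefect, ← hwz, sub_self]
  have hle := norm_add_le ((β : ℂ) * (1 - w) ^ 2) (quadraticDefect Φ β z w)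
  have hge := norm_sub_le_norm_add ((β : ℂ) * (1 - w) ^ 2) (quadraticDefect Φ β z w)
  rw [← heq, hquad] at hle hge
  have hz : ‖1 - z‖ * ‖1 - w‖ ≤ ‖1 - z‖ * (1 / 32) := by
    gcongr
    exact hw.1.le.trans hwt
  have : 0 ≤ β * ‖1 - w‖ ^ 2 := by positivity
  constructor <;> nlinarith

lemma mul_norm_sub_le_norm_sub_mul (h : IsParabolicAtOne Φ β t) (ha : a ∈ stolzSector t)
    (hb : b ∈ stolzSector t) (haz : a = z * Φ a) :
    β / 8 * ‖1 - a‖ * ‖b - a‖ ≤ ‖b - z * Φ b‖ := by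
  have ht := h.radius_le
  have hβ := h.curvature_pos
  obtain ⟨M, hM⟩ : ∃ M, M = max ‖1 - a‖ ‖1 - b‖ := ⟨_, rfl⟩
  have haM : ‖1 - a‖ ≤ M := hM ▸ le_max_left _ _
  have hbM : ‖1 - b‖ ≤ M := hM ▸ le_max_right _ _
  have hMt : M ≤ t := hM ▸ max_le ha.1.le hb.1.le
  have hdefect := h.norm_quadraticDefect_sub_le (z := z) hMt
    (norm_lt_one_of_mem_stolzSector ht hb).le (norm_lt_one_of_mem_stolzSector ht ha).le hbM haM
  have hres : b - z * Φ b = β * (1 - a + (1 - b)) * (b - a) -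
      (quadraticDefect Φ β z b - quadraticDefect Φ β z a) := by
    have haz' := sub_mul_eq_sub_quadraticDefect Φ β z a
    rw [sub_mul_eq_sub_quadraticDefect Φ β z b]
    linear_combination haz - haz'
  have hsum : M / 4 ≤ ‖1 - a + (1 - b)‖ := by
    have hre := Complex.re_le_norm (1 - a + (1 - b))
    rw [Complex.add_re] at hre
    have : M ≤ ‖1 - a‖ + ‖1 - b‖ :=
      hM ▸ max_le (by linarith [norm_nonneg (1 - b)]) (by linarith [norm_nonneg (1 - a)])
    linarith [ha.2, hb.2]
  have hz : ‖1 - z‖ ≤ β / 16 * M := by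
    refine (h.norm_one_sub_le_and_le ha haz).2.trans ?_
    have : ‖1 - a‖ ^ 2 ≤ 1 / 32 * M := by
      rw [sq]
      exact mul_le_mul (by linarith) haM (norm_nonneg _) (by norm_num)
    nlinarith
  calc β / 8 * ‖1 - a‖ * ‖b - a‖ ≤ β / 8 * M * ‖b - a‖ := by gcongr
    _ = β * (M / 4) * ‖b - a‖ - (β / 16 * M + β / 16 * M) * ‖b - a‖ := by ring
    _ ≤ β * ‖1 - a + (1 - b)‖ * ‖b - a‖ - (β / 16 * M + ‖1 - z‖) * ‖b - a‖ := by gcongr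
    _ ≤ ‖(β : ℂ) * (1 - a + (1 - b)) * (b - a)‖ -
        ‖quadraticDefect Φ β z b - quadraticDefect Φ β z a‖ := by
      rw [norm_mul, norm_mul, Complex.norm_real, Real.norm_of_nonneg hβ.le]
      gcongr
    _ ≤ ‖b - z * Φ b‖ := hres ▸ norm_sub_norm_le _ _

lemma lipschitzOnWith_quadraticDefect (h : IsParabolicAtOne Φ β t) {u : ℂ}
    (hu : ‖u‖ / 2 < u.re) (hut : ‖u‖ < t / 2) (hz : ‖1 - z‖ = β * ‖u‖ ^ 2) :
    LipschitzOnWith (‖u‖₊ / 2) (fun v => quadraticDefect Φ β z (1 - v) / β)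
      (closedBall u (‖u‖ / 8)) := by
  have ht := h.radius_le
  have hβ := h.curvature_pos
  have hmem {v : ℂ} (hv : v ∈ closedBall u (‖u‖ / 8)) :=
    one_sub_mem_stolzSector_of_mem_closedBall hu hut hv
  have hnorm {v : ℂ} (hv : v ∈ closedBall u (‖u‖ / 8)) : ‖1 - v‖ ≤ 1 :=
    (norm_lt_one_of_mem_stolzSector ht (hmem hv).2).le
  have hconst : β / 16 * (9 / 8 * ‖u‖) + ‖1 - z‖ ≤ β * (‖u‖ / 2) := by
    rw [hz]
    nlinarith [norm_nonneg u, mul_nonneg hβ.le (norm_nonneg u)]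
  refine lipschitzOnWith_iff_norm_sub_le.2 fun v hv w hw => ?_
  have hdefect := h.norm_quadraticDefect_sub_le (z := z) (M := 9 / 8 * ‖u‖)
    (by linarith [norm_nonneg u]) (hnorm hv) (hnorm hw)
    (by rw [sub_sub_cancel]; exact (hmem hv).1) (by rw [sub_sub_cancel]; exact (hmem hw).1)
  rw [sub_sub_sub_cancel_left, norm_sub_rev w] at hdefect
  rw [← sub_div, norm_div, Complex.norm_real, Real.norm_of_nonneg hβ.le, div_le_iff₀' hβ,
    ← mul_assoc]
  exact hdefect.trans (mul_le_mul_of_nonneg_right hconst (norm_nonneg _))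

/-- Substituting `w = 1 - v` turns `w = z Φ(w)` into a perturbation of `v² = u²`. -/
lemma exists_mem_stolzSector_of_eq_mul_sq (h : IsParabolicAtOne Φ β t) {u : ℂ}
    (hu : ‖u‖ / 2 < u.re) (hut : ‖u‖ < t / 2) (hzu : 1 - z = β * u ^ 2) :
    ∃ w ∈ stolzSector t, w = z * Φ w := by
  have ht := h.radius_le
  have hβ := h.curvature_pos
  have hβ' : (β : ℂ) ≠ 0 := mod_cast hβ.ne'
  have hu0 : u ≠ 0 := by
    rintro rfl
    simp at hu
  have hz : ‖1 - z‖ = β * ‖u‖ ^ 2 := by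
    rw [hzu, norm_mul, norm_pow, Complex.norm_real, Real.norm_of_nonneg hβ.le]
  have hNu : ‖quadraticDefect Φ β z (1 - u) / β‖ ≤ ‖u‖ ^ 2 / 8 := by
    have husector := (one_sub_mem_stolzSector_of_mem_closedBall hu hut
      (mem_closedBall_self (by positivity))).2
    have hdefect := h.norm_quadraticDefect_le (z := z)
      (norm_lt_one_of_mem_stolzSector ht husector).le husector.1.le
    rw [sub_sub_cancel] at hdefect
    rw [norm_div, Complex.norm_real, Real.norm_of_nonneg hβ.le, div_le_iff₀' hβ]
    have hcube : β * ‖u‖ ^ 2 * ‖u‖ ≤ β * ‖u‖ ^ 2 * (1 / 16) := by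
      gcongr
      linarith
    rw [hz] at hdefect
    linarith
  obtain ⟨v, hv, hvu⟩ :=
    exists_sq_add_eq_sq hu0 (h.lipschitzOnWith_quadraticDefect hu hut hz) hNu
  refine ⟨1 - v, (one_sub_mem_stolzSector_of_mem_closedBall hu hut hv).2, ?_⟩
  rw [← sub_eq_zero, sub_mul_eq_sub_quadraticDefect Φ β, sub_sub_cancel, hzu, ← hvu, mul_add,
    mul_div_cancel₀ _ hβ', sub_self]

lemma exists_mem_stolzSector (h : IsParabolicAtOne Φ β t) (hz : ‖1 - z‖ < β * t ^ 2 / 4)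
    (hzre : (z - 1).re < ‖z - 1‖ / 2) : ∃ w ∈ stolzSector t, w = z * Φ w := by
  have ht0 := h.radius_pos
  have hβ := h.curvature_pos
  obtain ⟨u, hu, hure⟩ : ∃ u : ℂ, u ^ 2 = (1 - z) / β ∧ ‖u‖ / 2 < u.re := by
    refine exists_sq_eq_of_neg_norm_div_two_lt_re ?_
    rw [Complex.div_ofReal_re, norm_div, Complex.norm_real, Real.norm_of_nonneg hβ.le,
      div_right_comm, ← neg_div]
    gcongr
    rw [← neg_sub z, norm_neg, Complex.neg_re]
    linarith
  have hzu : 1 - z = β * u ^ 2 := by rw [hu, mul_div_cancel₀ _ (mod_cast hβ.ne')]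
  refine h.exists_mem_stolzSector_of_eq_mul_sq hure ?_ hzu
  rw [hzu, norm_mul, norm_pow, Complex.norm_real, Real.norm_of_nonneg hβ.le] at hz
  refine lt_of_pow_lt_pow_left₀ 2 (by positivity) (lt_of_mul_lt_mul_left ?_ hβ.le)
  linarith

end IsParabolicAtOne

/-! ### Solutions away from the fixed point -/

/-- `Φ` contracts distances to the points of every disc `|w| ≤ x < 1`, uniformly over the closed
unit disc. -/
def ContractsInside (Φ : ℂ → ℂ) : Prop :=
  ∀ x, 0 ≤ x → x < 1 → ∃ ρ : NNReal, ρ < 1 ∧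
    ∀ a b : ℂ, ‖a‖ ≤ x → ‖b‖ ≤ 1 → ‖Φ a - Φ b‖ ≤ ρ * ‖a - b‖

lemma exists_mem_closedBall_eq_mul {Φ : ℂ → ℂ} {ρ : NNReal} {z₀ z a : ℂ} {η : ℝ}
    (hΦ : LipschitzOnWith ρ Φ (closedBall a η)) (ha : a = z₀ * Φ a) (hzρ : ‖z‖ * ρ < 1)
    (hzz₀ : ‖z - z₀‖ * ‖Φ a‖ ≤ (1 - ‖z‖ * ρ) * η) : ∃ w ∈ closedBall a η, w = z * Φ w := by
  have hT : LipschitzOnWith (‖z‖₊ * ρ) (fun w => z * Φ w) (closedBall a η) :=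
    (lipschitzWith_smul z).comp_lipschitzOnWith hΦ
  have hTa : dist (z * Φ a) a ≤ (1 - (‖z‖₊ * ρ : NNReal)) * η := by
    have : z * Φ a - a = (z - z₀) * Φ a := by linear_combination -ha
    rwa [dist_eq_norm, this, norm_mul]
  obtain ⟨w, hw, hfix⟩ := exists_fixedPoint_mem_closedBall (by exact_mod_cast hzρ) hT hTa
  exact ⟨w, hw, hfix.symm⟩

lemma mul_norm_sub_le_norm_sub_mul_sub {Φ : ℂ → ℂ} {ρ : ℝ} {a b : ℂ}
    (hΦ : ‖Φ a - Φ b‖ ≤ ρ * ‖a - b‖) (z : ℂ) :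
    (1 - ‖z‖ * ρ) * ‖a - b‖ ≤ ‖(a - z * Φ a) - (b - z * Φ b)‖ := by
  have hle := norm_sub_norm_le (a - b) (z * (Φ a - Φ b))
  have heq : (a - z * Φ a) - (b - z * Φ b) = a - b - z * (Φ a - Φ b) := by ring
  rw [heq]
  rw [norm_mul] at hle
  linarith [mul_le_mul_of_nonneg_left hΦ (norm_nonneg z)]

lemma exists_gt_one_half_le_one_sub_mul {ρ : ℝ} (hρ0 : 0 ≤ ρ) (hρ1 : ρ < 1) :
    ∃ R > 1, ∀ s < R, (1 - ρ) / 2 ≤ 1 - s * ρ :=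
  ⟨1 + (1 - ρ) / 2, by linarith, fun s hs => by nlinarith⟩

lemma ContractsInside.exists_mul_norm_sub_le {Φ : ℂ → ℂ} (hΦ : ContractsInside Φ) {x : ℝ}
    (hx0 : 0 ≤ x) (hx1 : x < 1) :
    ∃ R > 1, ∃ κ > 0, ∀ z a b : ℂ, ‖z‖ < R → ‖a‖ ≤ x → ‖b‖ ≤ 1 →
      κ * ‖a - b‖ ≤ ‖(a - z * Φ a) - (b - z * Φ b)‖ := by
  obtain ⟨ρ, hρ, hΦρ⟩ := hΦ x hx0 hx1
  have hρ' : (ρ : ℝ) < 1 := mod_cast hρ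
  obtain ⟨R, hR, hgap⟩ := exists_gt_one_half_le_one_sub_mul ρ.coe_nonneg hρ'
  exact ⟨R, hR, (1 - ρ) / 2, half_pos (sub_pos.2 hρ'), fun z a b hz ha hb =>
    (mul_le_mul_of_nonneg_right (hgap _ hz) (norm_nonneg _)).trans
      (mul_norm_sub_le_norm_sub_mul_sub (hΦρ a b ha hb) z)⟩

lemma ContractsInside.exists_mem_ball_eq_mul {Φ : ℂ → ℂ} (hΦ : ContractsInside Φ)
    (hΦ1 : ∀ w : ℂ, ‖w‖ ≤ 1 → ‖Φ w‖ ≤ 1) {x₀ x : ℝ} (hx₀ : 0 ≤ x₀) (hx₀x : x₀ < x) (hx1 : x < 1) :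
    ∃ e > 0, ∀ z z₀ a : ℂ, ‖z₀‖ ≤ 1 → ‖z - z₀‖ < e → ‖a‖ ≤ x₀ → a = z₀ * Φ a →
      ∃ w ∈ ball 0 x, w = z * Φ w := by
  obtain ⟨ρ, hρ, hΦρ⟩ := hΦ x (hx₀.trans hx₀x.le) hx1
  have hρ1 : (0 : ℝ) < 1 - ρ := sub_pos.2 (mod_cast hρ)
  obtain ⟨R, hR, hgap⟩ := exists_gt_one_half_le_one_sub_mul ρ.coe_nonneg (sub_pos.1 hρ1)
  have : 0 < (x - x₀) / 2 := half_pos (sub_pos.2 hx₀x)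
  refine ⟨min (R - 1) ((1 - ρ) / 2 * ((x - x₀) / 2)), lt_min (sub_pos.2 hR) (by positivity),
    fun z z₀ a hz₀ hzz₀ ha haz => ?_⟩
  obtain ⟨hzR, hzη⟩ := lt_min_iff.1 hzz₀
  have hz := hgap ‖z‖ (by linarith [norm_le_norm_add_norm_sub' z z₀])
  have hsub : closedBall a ((x - x₀) / 2) ⊆ ball 0 x :=
    closedBall_subset_ball' (by rw [dist_zero_right]; linarith)
  have hlip : LipschitzOnWith ρ Φ (closedBall a ((x - x₀) / 2)) :=
    lipschitzOnWith_iff_norm_sub_le.2 fun b hb c hc => hΦρ b c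
      (mem_ball_zero_iff.1 (hsub hb)).le ((mem_ball_zero_iff.1 (hsub hc)).trans hx1).le
  have hdist : ‖z - z₀‖ * ‖Φ a‖ ≤ (1 - ‖z‖ * ρ) * ((x - x₀) / 2) :=
    calc ‖z - z₀‖ * ‖Φ a‖ ≤ ‖z - z₀‖ :=
          mul_le_of_le_one_right (norm_nonneg _) (hΦ1 a (by linarith))
      _ ≤ (1 - ρ) / 2 * ((x - x₀) / 2) := hzη.le
      _ ≤ (1 - ‖z‖ * ρ) * ((x - x₀) / 2) := by gcongr
  obtain ⟨w, hw, hwz⟩ := exists_mem_closedBall_eq_mul hlip haz (by linarith) hdist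
  exact ⟨w, hsub hw, hwz⟩

lemma exists_lt_forall_le_of_isCompact {X : Type*} [TopologicalSpace X] {K : Set X}
    (hK : IsCompact K) {f : X → ℝ} (hf : ContinuousOn f K) {c : ℝ} (hfc : ∀ x ∈ K, f x < c) :
    ∃ c' < c, ∀ x ∈ K, f x ≤ c' := by
  rcases K.eq_empty_or_nonempty with rfl | hne
  · exact ⟨c - 1, sub_one_lt c, fun x hx => hx.elim⟩
  · obtain ⟨x, hx, hmax⟩ := hK.exists_isMaxOn hne hf
    exact ⟨f x, hfc x hx, hmax⟩

lemma exists_norm_le_one_norm_sub_lt {E : Type*} [NormedAddCommGroup E] [NormedSpace ℝ E] {e : ℝ}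
    (he : 0 < e) {z : E} (hz : ‖z‖ < 1 + e) : ∃ z₀ : E, ‖z₀‖ ≤ 1 ∧ ‖z - z₀‖ < e := by
  have hz' : z ∈ thickening e (closedBall 0 1) := by
    rwa [thickening_closedBall he zero_le_one, add_comm, mem_ball_zero_iff]
  simpa only [mem_thickening_iff, mem_closedBall_zero_iff, dist_eq_norm] using hz'

section AwayFromOne

variable {Φ y : ℂ → ℂ} {r : ℝ}

lemma exists_lt_one_forall_norm_le (hyc : ContinuousOn y (closedBall 0 1))
    (hy1 : ∀ z : ℂ, ‖z‖ ≤ 1 → z ≠ 1 → ‖y z‖ < 1) (hr : 0 < r) :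
    ∃ x, 0 ≤ x ∧ x < 1 ∧ ∀ z : ℂ, ‖z‖ ≤ 1 → r ≤ ‖z - 1‖ → ‖y z‖ ≤ x := by
  have hK : IsCompact (closedBall (0 : ℂ) 1 ∩ {z | r ≤ ‖z - 1‖}) :=
    (isCompact_closedBall _ _).inter_right (isClosed_le continuous_const (by fun_prop))
  have hlt : ∀ z ∈ closedBall (0 : ℂ) 1 ∩ {z | r ≤ ‖z - 1‖}, ‖y z‖ < 1 := fun z ⟨hz, hzr⟩ => by
    refine hy1 z (mem_closedBall_zero_iff.1 hz) ?_
    rintro rfl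
    simp [hr.not_ge] at hzr
  obtain ⟨x, hx, hyx⟩ :=
    exists_lt_forall_le_of_isCompact hK (hyc.norm.mono inter_subset_left) hlt
  exact ⟨max 0 x, le_max_left _ _, max_lt one_pos hx, fun z hz hzr =>
    (hyx z ⟨mem_closedBall_zero_iff.2 hz, hzr⟩).trans (le_max_right _ _)⟩

lemma ContractsInside.exists_solution_and_mul_norm_sub_le (hΦ : ContractsInside Φ)
    (hΦ1 : ∀ w : ℂ, ‖w‖ ≤ 1 → ‖Φ w‖ ≤ 1) (hyc : ContinuousOn y (closedBall 0 1))
    (hy : ∀ z : ℂ, ‖z‖ ≤ 1 → y z = z * Φ (y z)) (hy1 : ∀ z : ℂ, ‖z‖ ≤ 1 → z ≠ 1 → ‖y z‖ < 1)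
    (hr : 0 < r) :
    ∃ R > 1, ∃ x < 1, ∃ κ > 0,
      (∀ z : ℂ, ‖z‖ < R → r ≤ ‖z - 1‖ → ∃ w ∈ ball 0 x, w = z * Φ w) ∧
      ∀ z a b : ℂ, ‖z‖ < R → ‖a‖ ≤ x → ‖b‖ ≤ 1 →
        κ * ‖a - b‖ ≤ ‖(a - z * Φ a) - (b - z * Φ b)‖ := by
  obtain ⟨x₀, hx₀, hx₀1, hyx₀⟩ := exists_lt_one_forall_norm_le hyc hy1 (half_pos hr)
  obtain ⟨x, hx₀x, hx1⟩ := exists_between hx₀1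
  obtain ⟨R, hR, κ, hκ, hres⟩ := hΦ.exists_mul_norm_sub_le (hx₀.trans hx₀x.le) hx1
  obtain ⟨e, he, hex⟩ := hΦ.exists_mem_ball_eq_mul hΦ1 hx₀ hx₀x hx1
  have hmin : 0 < min e (r / 2) := by positivity
  refine ⟨min R (1 + min e (r / 2)), lt_min hR (lt_add_of_pos_right 1 hmin), x, hx1, κ, hκ,
    fun z hz hzr => ?_, fun z a b hz => hres z a b (lt_min_iff.1 hz).1⟩
  obtain ⟨z₀, hz₀, hzz₀⟩ := exists_norm_le_one_norm_sub_lt hmin (lt_min_iff.1 hz).2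
  obtain ⟨hzz₀e, hzz₀r⟩ := lt_min_iff.1 hzz₀
  have hz₀r : r / 2 ≤ ‖z₀ - 1‖ := by linarith [norm_sub_le_norm_sub_add_norm_sub z z₀ 1]
  exact hex z z₀ (y z₀) hz₀ hzz₀e (hyx₀ z₀ hz₀ hz₀r) (hy z₀ hz₀)

end AwayFromOne

lemma mem_deltaDom_iff {R θ : ℝ} (hθ : θ ∈ Icc 0 Real.pi) {z : ℂ} :
    z ∈ deltaDom R θ ↔ ‖z‖ < R ∧ (z - 1).re < ‖z - 1‖ * Real.cos θ := by
  refine and_congr_right fun _ => ?_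
  rcases eq_or_ne z 1 with rfl | hz
  · simp
  have hz' : z - 1 ≠ 0 := sub_ne_zero.2 hz
  rw [and_iff_right hz,
    ← Real.strictAntiOn_cos.lt_iff_gt ⟨abs_nonneg _, Complex.abs_arg_le_pi _⟩ hθ,
    Real.cos_abs, Complex.cos_arg hz', div_lt_iff₀' (norm_pos_iff.2 hz')]

lemma isOpen_deltaDom (R : ℝ) {θ : ℝ} (hθ : θ ∈ Icc 0 Real.pi) : IsOpen (deltaDom R θ) := by
  have h : Continuous fun z : ℂ => z - 1 := by fun_prop
  simp only [Set.ext fun z => mem_deltaDom_iff (R := R) hθ (z := z)]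
  exact (isOpen_lt continuous_norm continuous_const).inter
    (isOpen_lt (Complex.continuous_re.comp h) (h.norm.mul continuous_const))

lemma ball_subset_deltaDom {R θ : ℝ} (hR : 1 ≤ R) (hθ : θ ∈ Icc 0 (Real.pi / 2)) :
    ball 0 1 ⊆ deltaDom R θ := fun z hz => by
  rw [mem_ball_zero_iff] at hz
  rw [mem_deltaDom_iff ⟨hθ.1, by linarith [hθ.2, Real.pi_pos]⟩]
  refine ⟨hz.trans_le hR, lt_of_lt_of_le ?_ (mul_nonneg (norm_nonneg _)
    (Real.cos_nonneg_of_mem_Icc ⟨by linarith [hθ.1, Real.pi_pos], hθ.2⟩))⟩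
  rw [Complex.sub_re, Complex.one_re, sub_neg]
  exact (Complex.re_le_norm z).trans_lt hz

/-- `Y` approaches `1` like a square root: `|1 - Y(z)|` and `1 - |Y(z)|` are both of exact order
`|1 - z|^(1/2)` on `D`. The bounds are squared so that raising them to the power `γ/2` is
immediate. -/
structure SqrtApproachOn (Y : ℂ → ℂ) (D : Set ℂ) : Prop where
  norm_lt_one : ∀ z ∈ D, ‖Y z‖ < 1
  sq_norm_one_sub_isBigO : (fun z => ‖1 - Y z‖ ^ 2) =O[𝓟 D] fun z => ‖1 - z‖
  isBigO_sq_one_sub_norm : (fun z => ‖1 - z‖) =O[𝓟 D] fun z => (1 - ‖Y z‖) ^ 2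

section BallUnionStolzSector

variable {Φ : ℂ → ℂ} {β t x κ R : ℝ}

lemma norm_lt_one_of_mem_ball_union_stolzSector (hx : x < 1) (ht : t ≤ 1 / 32) {w : ℂ}
    (hw : w ∈ ball 0 x ∪ stolzSector t) : ‖w‖ < 1 :=
  hw.elim (fun hw => (mem_ball_zero_iff.1 hw).trans hx) (norm_lt_one_of_mem_stolzSector ht)

lemma IsParabolicAtOne.exists_pos_mul_norm_sub_le (h : IsParabolicAtOne Φ β t) (hx : x < 1)
    (hκ : 0 < κ) {z a : ℂ}
    (hres : ∀ a b : ℂ, ‖a‖ ≤ x → ‖b‖ ≤ 1 → κ * ‖a - b‖ ≤ ‖(a - z * Φ a) - (b - z * Φ b)‖)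
    (ha : a ∈ ball 0 x ∪ stolzSector t) (haz : a = z * Φ a) :
    ∃ c > 0, ∀ b ∈ ball 0 x ∪ stolzSector t, c * ‖b - a‖ ≤ ‖b - z * Φ b‖ := by
  have hβ := h.curvature_pos
  have hle {b : ℂ} := norm_lt_one_of_mem_ball_union_stolzSector (w := b) hx h.radius_le
  have haz0 : a - z * Φ a = 0 := sub_eq_zero.2 haz
  rcases ha with ha | ha
  · refine ⟨κ, hκ, fun b hb => ?_⟩
    have := hres a b (mem_ball_zero_iff.1 ha).le (hle hb).le
    rwa [haz0, zero_sub, norm_neg, norm_sub_rev] at this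
  · have hapos := norm_one_sub_pos_of_mem_stolzSector ha
    refine ⟨min κ (β / 8 * ‖1 - a‖), by positivity, fun b hb => ?_⟩
    rcases hb with hb | hb
    · have := hres b a (mem_ball_zero_iff.1 hb).le (hle (.inr ha)).le
      rw [haz0, sub_zero] at this
      exact (mul_le_mul_of_nonneg_right (min_le_left _ _) (norm_nonneg _)).trans this
    · exact (mul_le_mul_of_nonneg_right (min_le_right _ _) (norm_nonneg _)).trans
        (h.mul_norm_sub_le_norm_sub_mul ha hb haz)

variable {Y : ℂ → ℂ} {D : Set ℂ}

lemma IsParabolicAtOne.sq_norm_one_sub_isBigO (h : IsParabolicAtOne Φ β t) (hx : x ≤ 1)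
    (hκ : 0 < κ) (hres : ∀ z ∈ D, ∀ a b : ℂ, ‖a‖ ≤ x → ‖b‖ ≤ 1 →
      κ * ‖a - b‖ ≤ ‖(a - z * Φ a) - (b - z * Φ b)‖)
    (hY : ∀ z ∈ D, Y z ∈ ball 0 x ∪ stolzSector t ∧ Y z = z * Φ (Y z)) :
    (fun z => ‖1 - Y z‖ ^ 2) =O[𝓟 D] fun z => ‖1 - z‖ := by
  refine isBigO_principal.2 ⟨max (2 / κ) (2 / β), fun z hz => ?_⟩
  obtain ⟨hw | hw, hwz⟩ := hY z hz
  all_goals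
    rw [norm_norm, norm_pow, norm_norm, max_mul_of_nonneg _ _ (norm_nonneg _), le_max_iff,
      div_mul_eq_mul_div, div_mul_eq_mul_div, le_div_iff₀ hκ, le_div_iff₀ h.curvature_pos]
  · left
    have hwx := (mem_ball_zero_iff.1 hw).le
    have hκw := hres z hz _ 1 hwx norm_one.le
    rw [sub_eq_zero.2 hwz, h.map_one, mul_one, zero_sub, norm_neg, norm_sub_rev] at hκw
    have hw2 : ‖1 - Y z‖ ≤ 2 := (_root_.norm_sub_le _ _).trans (by rw [norm_one]; linarith)
    calc ‖1 - Y z‖ ^ 2 * κ = ‖1 - Y z‖ * (κ * ‖1 - Y z‖) := by ring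
      _ ≤ 2 * ‖1 - z‖ := mul_le_mul hw2 hκw (by positivity) zero_le_two
  · right
    linarith [(h.norm_one_sub_le_and_le hw hwz).1]

lemma IsParabolicAtOne.isBigO_sq_one_sub_norm (h : IsParabolicAtOne Φ β t) (hx : x < 1)
    (hD : ∀ z ∈ D, ‖z‖ < R)
    (hY : ∀ z ∈ D, Y z ∈ ball 0 x ∪ stolzSector t ∧ Y z = z * Φ (Y z)) :
    (fun z => ‖1 - z‖) =O[𝓟 D] fun z => (1 - ‖Y z‖) ^ 2 := by
  refine isBigO_principal.2 ⟨max ((1 + R) / (1 - x) ^ 2) (128 * β), fun z hz => ?_⟩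
  obtain ⟨hw | hw, hwz⟩ := hY z hz
  all_goals
    rw [norm_norm, Real.norm_of_nonneg (sq_nonneg _), max_mul_of_nonneg _ _ (sq_nonneg _),
      le_max_iff]
  · left
    have hwx := mem_ball_zero_iff.1 hw
    have hzR : ‖1 - z‖ ≤ 1 + R := (_root_.norm_sub_le _ _).trans
      (by rw [norm_one]; linarith [hD z hz])
    have : 0 < 1 - x := sub_pos.2 hx
    rw [div_mul_eq_mul_div, le_div_iff₀ (by positivity)]
    have : (1 - x) ^ 2 ≤ (1 - ‖Y z‖) ^ 2 := by gcongr
    gcongr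
    exact (norm_nonneg _).trans hzR
  · right
    have hβ := h.curvature_pos
    have hw8 := norm_one_sub_div_eight_le_of_mem_stolzSector h.radius_le hw
    calc ‖1 - z‖ ≤ 2 * β * ‖1 - Y z‖ ^ 2 := (h.norm_one_sub_le_and_le hw hwz).2
      _ = 128 * β * (‖1 - Y z‖ / 8) ^ 2 := by ring
      _ ≤ 128 * β * (1 - ‖Y z‖) ^ 2 := by gcongr

end BallUnionStolzSector

lemma exists_deltaDom_branch {Φ y : ℂ → ℂ} {β t : ℝ} (h : IsParabolicAtOne Φ β t)
    (hd : DifferentiableOn ℂ Φ (ball 0 1)) (h0 : Φ 0 ≠ 0) (hΦ : ContractsInside Φ)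
    (hB : ∀ w : ℂ, ‖w‖ ≤ 1 → ‖Φ w‖ ≤ 1) (hyc : ContinuousOn y (closedBall 0 1))
    (hy : ∀ z : ℂ, ‖z‖ ≤ 1 → y z = z * Φ (y z)) (hy1 : ∀ z : ℂ, ‖z‖ ≤ 1 → z ≠ 1 → ‖y z‖ < 1) :
    ∃ R > 1, ∃ Y : ℂ → ℂ, DifferentiableOn ℂ Y (deltaDom R (Real.pi / 3)) ∧
      SqrtApproachOn Y (deltaDom R (Real.pi / 3)) ∧
      ∀ z ∈ deltaDom R (Real.pi / 3), Y z = z * Φ (Y z) := by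
  have hβ := h.curvature_pos
  have ht := h.radius_pos
  have hπ : Real.pi / 3 ∈ Icc 0 Real.pi := ⟨by positivity, by linarith [Real.pi_pos]⟩
  obtain ⟨R, hR, x, hx, κ, hκ, hex, hres⟩ := hΦ.exists_solution_and_mul_norm_sub_le hB
    hyc hy hy1 (show 0 < β * t ^ 2 / 4 by positivity)
  have hU1 {w : ℂ} := norm_lt_one_of_mem_ball_union_stolzSector (w := w) hx h.radius_le
  have hexU : ∀ z ∈ deltaDom R (Real.pi / 3), ∃ w ∈ ball 0 x ∪ stolzSector t, w = z * Φ w := by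
    intro z hz
    rw [mem_deltaDom_iff hπ, Real.cos_pi_div_three, mul_one_div] at hz
    rcases lt_or_ge ‖z - 1‖ (β * t ^ 2 / 4) with hz1 | hz1
    · obtain ⟨w, hw, hwz⟩ := h.exists_mem_stolzSector (by rwa [norm_sub_rev]) hz.2
      exact ⟨w, .inr hw, hwz⟩
    · obtain ⟨w, hw, hwz⟩ := hex z hz.1 hz1
      exact ⟨w, .inl hw, hwz⟩
  obtain ⟨Y, hYd, hY⟩ := exists_differentiableOn_branch
    (isOpen_ball.union (isOpen_stolzSector t))
    (hd.mono fun w hw => mem_ball_zero_iff.2 (hU1 hw)) h0 (fun w hw => hB w (hU1 hw).le)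
    (isOpen_deltaDom R hπ) hexU fun z hz a ha haz =>
      h.exists_pos_mul_norm_sub_le hx hκ (fun a b => hres z a b hz.1) ha haz
  refine ⟨R, hR, Y, hYd, ⟨fun z hz => hU1 (hY z hz).1, ?_, ?_⟩, fun z hz => (hY z hz).2⟩
  · exact h.sq_norm_one_sub_isBigO hx.le hκ (fun z hz a b => hres z a b hz.1) hY
  · exact h.isBigO_sq_one_sub_norm hx (fun z hz => hz.1) hY

/-! ### Estimates for powers -/

section Pow

variable {𝕜 : Type*} [NormedField 𝕜] {a b w : 𝕜} {x γ : ℝ}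

lemma norm_geom_sum₂_le (ha : ‖a‖ ≤ x) (hb : ‖b‖ ≤ 1) (k : ℕ) :
    ‖∑ i ∈ Finset.range k, a ^ i * b ^ (k - 1 - i)‖ ≤ ∑ i ∈ Finset.range k, x ^ i := by
  refine norm_sum_le_of_le _ fun i _ => ?_
  rw [norm_mul, norm_pow, norm_pow]
  calc ‖a‖ ^ i * ‖b‖ ^ (k - 1 - i) ≤ x ^ i * 1 := by
        gcongr
        · exact pow_nonneg ((norm_nonneg a).trans ha) i
        · exact pow_le_one₀ (norm_nonneg _) hb
    _ = x ^ i := mul_one _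

lemma sum_range_pow_le (hx0 : 0 ≤ x) (hx1 : x ≤ 1) (k : ℕ) :
    ∑ i ∈ Finset.range k, x ^ i ≤ k := by
  simpa using Finset.sum_le_sum (s := Finset.range k) fun _ _ => pow_le_one₀ hx0 hx1

lemma sum_range_pow_lt {k : ℕ} (hk : 2 ≤ k) (hx0 : 0 ≤ x) (hx1 : x < 1) :
    ∑ i ∈ Finset.range k, x ^ i < k := by
  have h : ∑ i ∈ Finset.range k, x ^ i < ∑ _i ∈ Finset.range k, (1 : ℝ) :=
    Finset.sum_lt_sum (fun _ _ => pow_le_one₀ hx0 hx1.le)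
      ⟨1, Finset.mem_range.2 hk, by rwa [pow_one]⟩
  simpa using h

lemma norm_one_sub_pow_le (hw : ‖w‖ ≤ 1) (k : ℕ) : ‖1 - w ^ k‖ ≤ k * ‖1 - w‖ := by
  have h := norm_geom_sum₂_le hw (norm_one (α := 𝕜)).le k
  simp only [one_pow, mul_one, Finset.sum_const, Finset.card_range, nsmul_eq_mul] at h
  rw [← mul_neg_geom_sum, norm_mul, mul_comm]
  gcongr

lemma norm_one_sub_pow_le_rpow (hγ0 : 0 ≤ γ) (hγ1 : γ ≤ 1) (hw : ‖w‖ ≤ 1) (k : ℕ) :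
    ‖1 - w ^ k‖ ≤ 2 * (k * ‖1 - w‖) ^ γ := by
  have h0 : 0 ≤ k * ‖1 - w‖ := by positivity
  rcases le_total (k * ‖1 - w‖) 1 with h | h
  · have hpow := Real.rpow_le_rpow_of_exponent_ge' h0 h hγ0 hγ1
    rw [Real.rpow_one] at hpow
    linarith [norm_one_sub_pow_le hw k]
  · have hpow := Real.one_le_rpow h hγ0
    have hle := norm_sub_le 1 (w ^ k)
    rw [norm_one, norm_pow] at hle
    linarith [pow_le_one₀ (n := k) (norm_nonneg w) hw]

lemma norm_pow_sub_one_add_le (hγ0 : 0 ≤ γ) (hγ1 : γ ≤ 1) (hw : ‖w‖ ≤ 1) (n : ℕ) :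
    ‖w ^ n - 1 + n * (1 - w)‖ ≤ 2 * (n * ‖1 - w‖) * (n * ‖1 - w‖) ^ γ := by
  have hfactor : w ^ n - 1 + n * (1 - w) = (1 - w) * ∑ i ∈ Finset.range n, (1 - w ^ i) := by
    rw [Finset.sum_sub_distrib, mul_sub (1 - w), mul_neg_geom_sum, Finset.sum_const,
      Finset.card_range, nsmul_one]
    ring
  have hsum : ‖∑ i ∈ Finset.range n, (1 - w ^ i)‖ ≤ n * (2 * (n * ‖1 - w‖) ^ γ) := by
    refine (norm_sum_le_of_le _ fun i hi => ?_).trans_eq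
      (by rw [Finset.sum_const, Finset.card_range, nsmul_eq_mul])
    have hin : (i : ℝ) ≤ n := mod_cast (Finset.mem_range.1 hi).le
    exact (norm_one_sub_pow_le_rpow hγ0 hγ1 hw i).trans (by gcongr)
  rw [hfactor, norm_mul]
  calc ‖1 - w‖ * ‖∑ i ∈ Finset.range n, (1 - w ^ i)‖
      ≤ ‖1 - w‖ * (n * (2 * (n * ‖1 - w‖) ^ γ)) := by gcongr
    _ = 2 * (n * ‖1 - w‖) * (n * ‖1 - w‖) ^ γ := by ring

end Pow

/-- The remainder of the second-order Taylor expansion of `w ^ k` at `1`. -/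
noncomputable def powTaylorRemainder (k : ℕ) (w : ℂ) : ℂ :=
  w ^ k - (1 - k * (1 - w) + k * (k - 1) / 2 * (1 - w) ^ 2)

lemma hasDerivAt_powTaylorRemainder (k : ℕ) (w : ℂ) :
    HasDerivAt (powTaylorRemainder k)
      (k * (w ^ (k - 1) - 1 + ((k - 1 : ℕ) : ℂ) * (1 - w))) w := by
  have hsub : HasDerivAt (fun w : ℂ => 1 - w) (-1) w := (hasDerivAt_id w).const_sub 1
  have hderiv := (hasDerivAt_pow k w).fun_sub (((hsub.const_mul (k : ℂ)).const_sub 1).fun_add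
    ((hsub.fun_pow 2).const_mul ((k : ℂ) * (k - 1) / 2)))
  refine hderiv.congr_deriv ?_
  rcases k with - | k
  · simp
  · push_cast [Nat.add_sub_cancel]
    ring

lemma norm_powTaylorRemainder_sub_le {γ M : ℝ} (hγ0 : 0 ≤ γ) (hγ1 : γ ≤ 1) {a b : ℂ}
    (ha : ‖a‖ ≤ 1) (hb : ‖b‖ ≤ 1) (haM : ‖1 - a‖ ≤ M) (hbM : ‖1 - b‖ ≤ M) (k : ℕ) :
    ‖powTaylorRemainder k a - powTaylorRemainder k b‖ ≤
      2 * (k : ℝ) ^ (2 + γ) * (M * M ^ γ) * ‖a - b‖ := by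
  have hM : 0 ≤ M := (norm_nonneg _).trans haM
  have hconv : Convex ℝ (closedBall (0 : ℂ) 1 ∩ closedBall 1 M) :=
    (convex_closedBall _ _).inter (convex_closedBall _ _)
  have hmem {w : ℂ} : w ∈ closedBall (0 : ℂ) 1 ∩ closedBall 1 M ↔ ‖w‖ ≤ 1 ∧ ‖1 - w‖ ≤ M := by
    rw [mem_inter_iff, mem_closedBall_zero_iff, mem_closedBall_iff_norm']
  refine hconv.norm_image_sub_le_of_norm_hasDerivWithin_le
    (fun w _ => (hasDerivAt_powTaylorRemainder k w).hasDerivWithinAt) (fun w hw => ?_)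
    (hmem.2 ⟨hb, hbM⟩) (hmem.2 ⟨ha, haM⟩)
  obtain ⟨hw1, hwM⟩ := hmem.1 hw
  have hk : ((k - 1 : ℕ) : ℝ) ≤ k := mod_cast Nat.sub_le k 1
  rw [norm_mul, Complex.norm_natCast]
  calc k * ‖w ^ (k - 1) - 1 + ((k - 1 : ℕ) : ℂ) * (1 - w)‖
      ≤ k * (2 * ((k - 1 : ℕ) * ‖1 - w‖) * ((k - 1 : ℕ) * ‖1 - w‖) ^ γ) := by
        gcongr
        exact norm_pow_sub_one_add_le hγ0 hγ1 hw1 _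
    _ ≤ k * (2 * (k * M) * (k * M) ^ γ) := by gcongr
    _ = 2 * (k : ℝ) ^ (2 + γ) * (M * M ^ γ) := by
        rw [Real.mul_rpow (by positivity) hM,
          Real.rpow_add_of_nonneg (by positivity) zero_le_two hγ0, Real.rpow_two]
        ring

lemma pow_sub_mul_exp_le {x : ℝ} (hx0 : 0 ≤ x) (hx1 : x ≤ 1) (k m : ℕ) :
    x ^ (k - m) * Real.exp (k * (1 - x)) ≤ Real.exp m := by
  have hexp : x ≤ Real.exp (x - 1) := by linarith [Real.add_one_le_exp (x - 1)]
  have hsub : (k : ℝ) ≤ (k - m : ℕ) + m := mod_cast Nat.sub_le_iff_le_add.1 le_rfl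
  calc x ^ (k - m) * Real.exp (k * (1 - x))
      ≤ Real.exp (x - 1) ^ (k - m) * Real.exp (k * (1 - x)) := by gcongr
    _ = Real.exp ((k - m : ℕ) * (x - 1) + k * (1 - x)) := by
        rw [← Real.exp_nat_mul, ← Real.exp_add]
    _ ≤ Real.exp m := by
        gcongr
        nlinarith [mul_nonneg m.cast_nonneg hx0 (α := ℝ)]

lemma descFactorial_mul_pow_le {s x : ℝ} {m : ℕ} (hm : m ≠ 0) (hsm : s ≤ m) (hx0 : 0 ≤ x)
    (hx1 : x < 1) (k : ℕ) :
    k.descFactorial m * x ^ (k - m) ≤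
      (m - s + 1) ^ (m - s) * Real.exp m * (k : ℝ) ^ s * (1 - x) ^ (s - m) := by
  have hα : 0 ≤ m - s := sub_nonneg.2 hsm
  have hx : 0 < 1 - x := sub_pos.2 hx1
  rcases Nat.eq_zero_or_pos k with rfl | hk
  · rw [Nat.descFactorial_eq_zero_iff_lt.2 (Nat.pos_of_ne_zero hm), Nat.cast_zero, zero_mul]
    positivity
  have hk' : (0 : ℝ) < k := mod_cast hk
  have hsplit : (k : ℝ) ^ m = (k : ℝ) ^ s * (k * (1 - x)) ^ (m - s) * (1 - x) ^ (s - m) := by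
    rw [Real.mul_rpow hk'.le hx.le, ← neg_sub (m : ℝ) s, Real.rpow_neg hx.le, ← mul_assoc,
      ← Real.rpow_add hk', add_sub_cancel, Real.rpow_natCast, mul_inv_cancel_right₀ (by positivity)]
  calc k.descFactorial m * x ^ (k - m) ≤ (k : ℝ) ^ m * x ^ (k - m) := by
        gcongr
        exact_mod_cast Nat.descFactorial_le_pow k m
    _ = (k * (1 - x)) ^ (m - s) * x ^ (k - m) * ((k : ℝ) ^ s * (1 - x) ^ (s - m)) := by
        rw [hsplit]
        ring
    _ ≤ (m - s + 1) ^ (m - s) * Real.exp (k * (1 - x)) * x ^ (k - m) *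
        ((k : ℝ) ^ s * (1 - x) ^ (s - m)) := by
        gcongr
        exact rpow_le_mul_exp hα (by positivity)
    _ = (m - s + 1) ^ (m - s) * (x ^ (k - m) * Real.exp (k * (1 - x))) *
        ((k : ℝ) ^ s * (1 - x) ^ (s - m)) := by ring
    _ ≤ (m - s + 1) ^ (m - s) * Real.exp m * ((k : ℝ) ^ s * (1 - x) ^ (s - m)) := by
        gcongr
        exact pow_sub_mul_exp_le hx0 hx1.le k m
    _ = (m - s + 1) ^ (m - s) * Real.exp m * (k : ℝ) ^ s * (1 - x) ^ (s - m) := by ring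

/-! ### Probability generating functions -/

section Pgf

variable {p : ℕ → ℝ} {w : ℂ}

lemma pgfC_zero (p : ℕ → ℝ) : pgfC p 0 = p 0 := by
  rw [pgfC, tsum_eq_single 0 fun k hk => by rw [zero_pow hk, mul_zero], pow_zero, mul_one]

lemma pgfC_ofReal (p : ℕ → ℝ) (x : ℝ) : pgfC p x = ((∑' k, p k * x ^ k : ℝ) : ℂ) := by
  push_cast [pgfC]
  rfl

lemma norm_ofReal_mul_pow_le {c : ℝ} (hc : 0 ≤ c) (hw : ‖w‖ ≤ 1) (k : ℕ) :
    ‖(c : ℂ) * w ^ k‖ ≤ c := by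
  rw [norm_mul, norm_pow, Complex.norm_real, Real.norm_of_nonneg hc]
  exact mul_le_of_le_one_right hc (pow_le_one₀ (norm_nonneg _) hw)

lemma hasSum_pgfC (hp : ∀ k, 0 ≤ p k) (hs : Summable p) (hw : ‖w‖ ≤ 1) :
    HasSum (fun k => (p k : ℂ) * w ^ k) (pgfC p w) :=
  (Summable.of_norm_bounded hs fun k => norm_ofReal_mul_pow_le (hp k) hw k).hasSum

lemma norm_pgfC_le_tsum (hp : ∀ k, 0 ≤ p k) (hs : Summable p) (hw : ‖w‖ ≤ 1) :
    ‖pgfC p w‖ ≤ ∑' k, p k :=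
  tsum_of_norm_bounded hs.hasSum fun k => norm_ofReal_mul_pow_le (hp k) hw k

lemma norm_pgfC_le_tsum_mul_norm (hp : ∀ k, 0 ≤ p k) (hs : Summable p) (hp0 : p 0 = 0)
    (hw : ‖w‖ ≤ 1) : ‖pgfC p w‖ ≤ (∑' k, p k) * ‖w‖ := by
  refine tsum_of_norm_bounded (hs.hasSum.mul_right ‖w‖) fun k => ?_
  rcases eq_or_ne k 0 with rfl | hk
  · simp [hp0]
  · rw [norm_mul, norm_pow, Complex.norm_real, Real.norm_of_nonneg (hp k)]
    exact mul_le_mul_of_nonneg_left (pow_le_of_le_one (norm_nonneg _) hw hk) (hp k)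

lemma diffContOnCl_pgfC (hp : ∀ k, 0 ≤ p k) (hs : Summable p) :
    DiffContOnCl ℂ (pgfC p) (ball 0 1) := by
  refine .mk_ball ?_ ?_
  · exact Complex.differentiableOn_tsum_of_summable_norm hs (fun k => by fun_prop) isOpen_ball
      fun k w hw => norm_ofReal_mul_pow_le (hp k) (mem_ball_zero_iff.1 hw).le k
  · exact continuousOn_tsum (fun k => by fun_prop) hs fun k w hw =>
      norm_ofReal_mul_pow_le (hp k) (mem_closedBall_zero_iff.1 hw) k

lemma hasSum_iteratedDeriv_pgfC (hp : ∀ k, 0 ≤ p k) (hs : Summable p) (m : ℕ) (hw : ‖w‖ < 1) :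
    HasSum (fun k : ℕ => ((k.descFactorial m * p k : ℝ) : ℂ) * w ^ (k - m))
      (iteratedDeriv m (pgfC p) w) := by
  refine (hasSum_iteratedDeriv_of_summable_norm isOpen_ball hs
    (F := fun k w => (p k : ℂ) * w ^ k) (fun k => by fun_prop) (fun k w hw =>
      norm_ofReal_mul_pow_le (hp k) (mem_ball_zero_iff.1 hw).le k) m
    (mem_ball_zero_iff.2 hw)).congr_fun fun k => ?_
  rw [iteratedDeriv_const_mul_field, iteratedDeriv_pow]
  push_cast
  ring

lemma summable_rpow_mul_of_le (hp : ∀ k, 0 ≤ p k) {r s : ℝ} (hr : 0 < r) (hrs : r ≤ s)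
    (h : Summable fun k : ℕ => (k : ℝ) ^ s * p k) : Summable fun k : ℕ => (k : ℝ) ^ r * p k := by
  refine h.of_nonneg_of_le (fun k => mul_nonneg (by positivity) (hp k)) fun k => ?_
  refine mul_le_mul_of_nonneg_right ?_ (hp k)
  rcases Nat.eq_zero_or_pos k with rfl | hk
  · rw [Nat.cast_zero, Real.zero_rpow hr.ne', Real.zero_rpow (hr.trans_le hrs).ne']
  · exact Real.rpow_le_rpow_of_exponent_le (mod_cast hk) hrs

lemma norm_iteratedDeriv_pgfC_sub_le (hp : ∀ k, 0 ≤ p k) (hs : Summable p) {m : ℕ} {γ c : ℝ}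
    (hγ0 : 0 ≤ γ) (hγ1 : γ ≤ 1) (hc : HasSum (fun k : ℕ => k.descFactorial m * p k) c)
    (hmom : Summable fun k : ℕ => (k : ℝ) ^ (m + γ) * p k) (hw : ‖w‖ < 1) :
    ‖iteratedDeriv m (pgfC p) w - c‖ ≤
      2 * (∑' k : ℕ, (k : ℝ) ^ (m + γ) * p k) * ‖1 - w‖ ^ γ := by
  have hsub := (hasSum_iteratedDeriv_pgfC hp hs m hw).sub (Complex.hasSum_ofReal.2 hc)
  rw [← hsub.tsum_eq]
  refine tsum_of_norm_bounded ((hmom.hasSum.mul_left 2).mul_right _) fun k => ?_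
  have hpk := hp k
  have hkm : ((k - m : ℕ) : ℝ) ≤ k := mod_cast Nat.sub_le k m
  have hterm : ((k.descFactorial m * p k : ℝ) : ℂ) * w ^ (k - m) -
      ((k.descFactorial m * p k : ℝ) : ℂ) =
      -(((k.descFactorial m * p k : ℝ) : ℂ) * (1 - w ^ (k - m))) := by ring
  rw [hterm, norm_neg, norm_mul, Complex.norm_real, Real.norm_of_nonneg (by positivity)]
  calc k.descFactorial m * p k * ‖1 - w ^ (k - m)‖
      ≤ (k : ℝ) ^ m * p k * (2 * (k * ‖1 - w‖) ^ γ) := by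
        gcongr
        · exact_mod_cast Nat.descFactorial_le_pow k m
        · exact (norm_one_sub_pow_le_rpow hγ0 hγ1 hw.le _).trans (by gcongr)
    _ = 2 * ((k : ℝ) ^ (m + γ) * p k) * ‖1 - w‖ ^ γ := by
        rw [Real.mul_rpow (by positivity) (by positivity),
          Real.rpow_add_of_nonneg (by positivity) (by positivity) hγ0, Real.rpow_natCast]
        ring

lemma isBigO_iteratedDeriv_pgfC_sub (hp : ∀ k, 0 ≤ p k) (hs : Summable p) {m : ℕ} {γ c : ℝ}
    (hγ0 : 0 ≤ γ) (hγ1 : γ ≤ 1) (hc : HasSum (fun k : ℕ => k.descFactorial m * p k) c)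
    (hmom : Summable fun k : ℕ => (k : ℝ) ^ (m + γ) * p k) :
    (fun w => iteratedDeriv m (pgfC p) w - c) =O[𝓟 (ball 0 1)] fun w => ‖1 - w‖ ^ γ := by
  refine isBigO_principal.2 ⟨2 * ∑' k : ℕ, (k : ℝ) ^ (m + γ) * p k, fun w hw => ?_⟩
  rw [Real.norm_of_nonneg (by positivity)]
  exact norm_iteratedDeriv_pgfC_sub_le hp hs hγ0 hγ1 hc hmom (mem_ball_zero_iff.1 hw)

lemma isBigO_iteratedDeriv_pgfC (hp : ∀ k, 0 ≤ p k) (hs : Summable p) {m : ℕ} {s : ℝ}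
    (hm : m ≠ 0) (hsm : s ≤ m) (hmom : Summable fun k : ℕ => (k : ℝ) ^ s * p k) :
    iteratedDeriv m (pgfC p) =O[𝓟 (ball 0 1)] fun w => (1 - ‖w‖) ^ (s - m) := by
  refine isBigO_principal.2 ⟨(m - s + 1) ^ (m - s) * Real.exp m * ∑' k : ℕ, (k : ℝ) ^ s * p k,
    fun w hw => ?_⟩
  have hw' : ‖w‖ < 1 := mem_ball_zero_iff.1 hw
  rw [Real.norm_of_nonneg (Real.rpow_nonneg (sub_nonneg.2 hw'.le) _),
    ← (hasSum_iteratedDeriv_pgfC hp hs m hw').tsum_eq]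
  refine tsum_of_norm_bounded ((hmom.hasSum.mul_left _).mul_right _) fun k => ?_
  rw [norm_mul, norm_pow, Complex.norm_real,
    Real.norm_of_nonneg (mul_nonneg (Nat.cast_nonneg _) (hp k))]
  linarith [mul_le_mul_of_nonneg_right
    (descFactorial_mul_pow_le hm hsm (norm_nonneg w) hw' k) (hp k)]

lemma norm_pgfC_sub_pgfC_le (hp : ∀ k, 0 ≤ p k) (hs : Summable p)
    (hs1 : Summable fun k : ℕ => (k : ℝ) * p k) {x : ℝ} (hx : x ≤ 1) {a b : ℂ} (ha : ‖a‖ ≤ x)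
    (hb : ‖b‖ ≤ 1) :
    ‖pgfC p a - pgfC p b‖ ≤ (∑' k, (∑ i ∈ Finset.range k, x ^ i) * p k) * ‖a - b‖ := by
  have hx0 : 0 ≤ x := (norm_nonneg a).trans ha
  have hsum : Summable fun k => (∑ i ∈ Finset.range k, x ^ i) * p k :=
    hs1.of_nonneg_of_le (fun k => mul_nonneg (by positivity) (hp k)) fun k =>
      mul_le_mul_of_nonneg_right (sum_range_pow_le hx0 hx k) (hp k)
  rw [← ((hasSum_pgfC hp hs (ha.trans hx)).sub (hasSum_pgfC hp hs hb)).tsum_eq]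
  refine tsum_of_norm_bounded (hsum.hasSum.mul_right _) fun k => ?_
  have hpk := hp k
  rw [← mul_sub, ← geom_sum₂_mul, norm_mul, norm_mul, Complex.norm_real,
    Real.norm_of_nonneg hpk, ← mul_assoc, mul_comm (p k)]
  gcongr
  exact norm_geom_sum₂_le ha hb k

lemma eq_one_of_norm_pgfC_eq_one (hp : ∀ k, 0 ≤ p k) (hp1 : HasSum p 1)
    (hspan : ∀ d : ℕ, (∀ k, p k ≠ 0 → d ∣ k) → d = 1) (h0 : p 0 ≠ 0) (hw : ‖w‖ ≤ 1)
    (h : ‖pgfC p w‖ = 1) : w = 1 := by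
  have hpow {k : ℕ} (hk : p k ≠ 0) : w ^ k = pgfC p w := by
    refine eq_of_hasSum_smul_of_norm_eq_one hp hp1 (u := fun k => w ^ k) (fun k => ?_) h ?_ hk
    · rw [norm_pow]
      exact pow_le_one₀ (norm_nonneg _) hw
    · simpa only [Complex.real_smul] using hasSum_pgfC hp hp1.summable hw
  have hpgf : pgfC p w = 1 := by rw [← hpow h0, pow_zero]
  exact orderOf_eq_one_iff.1 <| hspan (orderOf w) fun k hk =>
    orderOf_dvd_of_pow_eq_one ((hpow hk).trans hpgf)

end Pgf

lemma eqOn_closedBall_of_eqOn_ofReal {f g : ℂ → ℂ} (hf : DiffContOnCl ℂ f (ball 0 1))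
    (hg : DiffContOnCl ℂ g (ball 0 1)) (hfg : ∀ x ∈ Ioo (0 : ℝ) 1, f x = g x) :
    EqOn f g (closedBall 0 1) := by
  have hreal : Tendsto (fun x : ℝ => (x : ℂ)) (𝓝[>] 0) (𝓝[≠] 0) :=
    tendsto_nhdsWithin_iff.2 ⟨(Complex.continuous_ofReal.tendsto' 0 0 Complex.ofReal_zero).mono_left
      nhdsWithin_le_nhds, eventually_nhdsWithin_of_forall fun x hx =>
        Complex.ofReal_ne_zero.2 (mem_Ioi.1 hx).ne'⟩
  have hfreq : ∃ᶠ z in 𝓝[≠] (0 : ℂ), f z = g z :=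
    hreal.frequently (eventually_of_mem (Ioo_mem_nhdsGT zero_lt_one) hfg).frequently
  have hball : EqOn f g (ball 0 1) :=
    (hf.differentiableOn.analyticOnNhd isOpen_ball).eqOn_of_preconnected_of_frequently_eq
      (hg.differentiableOn.analyticOnNhd isOpen_ball) (convex_ball _ _).isPreconnected
      (mem_ball_self one_pos) hfreq
  exact hball.of_subset_closure hf.continuousOn_ball hg.continuousOn_ball ball_subset_closedBall
    (closure_ball _ one_ne_zero).ge

lemma pgfC_eq_mul_pgfC {p q : ℕ → ℝ} (hp : ∀ k, 0 ≤ p k) (hps : Summable p)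
    (hq : ∀ n, 0 ≤ q n) (hq1 : HasSum q 1) (hq0 : q 0 = 0)
    (hfix : ∀ x ∈ Ioo (0 : ℝ) 1, pgfC q x = x * pgfC p (pgfC q x)) {z : ℂ} (hz : ‖z‖ ≤ 1) :
    pgfC q z = z * pgfC p (pgfC q z) := by
  have hmaps : MapsTo (pgfC q) (ball 0 1) (ball 0 1) := fun v hv => by
    rw [mem_ball_zero_iff] at hv ⊢
    have := norm_pgfC_le_tsum_mul_norm hq hq1.summable hq0 hv.le
    rw [hq1.tsum_eq, one_mul] at this
    exact this.trans_lt hv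
  have hdq := diffContOnCl_pgfC hq hq1.summable
  exact eqOn_closedBall_of_eqOn_ofReal hdq
    (differentiable_id.diffContOnCl.smul ((diffContOnCl_pgfC hp hps).comp hdq hmaps)) hfix
    (mem_closedBall_zero_iff.2 hz)

/-- A critical offspring distribution: the weights `p` sum to one and have mean one. -/
structure IsCriticalOffspring (p : ℕ → ℝ) : Prop where
  nonneg : ∀ k, 0 ≤ p k
  hasSum : HasSum p 1
  hasSum_mul : HasSum (fun k : ℕ => (k : ℝ) * p k) 1

lemma exists_two_le_ne_zero_of_hasSum {p : ℕ → ℝ} {v : ℝ}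
    (hv : HasSum (fun k : ℕ => (k : ℝ) * (k - 1) * p k) v) (hv0 : v ≠ 0) :
    ∃ n ≥ 2, p n ≠ 0 := by
  by_contra! h
  refine hv0 (hv.unique (hasSum_zero.congr_fun fun k => ?_))
  rcases lt_or_ge k 2 with hk | hk
  · interval_cases k <;> simp
  · rw [h k hk, mul_zero]

namespace IsCriticalOffspring

variable {p : ℕ → ℝ}

lemma apply_zero_ne_zero (h : IsCriticalOffspring p) (hn : ∃ n ≥ 2, p n ≠ 0) : p 0 ≠ 0 := by
  obtain ⟨n, hn, hpn⟩ := hn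
  intro h0
  have hsub := h.hasSum_mul.sub h.hasSum
  rw [sub_self] at hsub
  have hnonneg : ∀ k : ℕ, 0 ≤ (k : ℝ) * p k - p k := fun k => by
    rcases Nat.eq_zero_or_pos k with rfl | hk
    · rw [h0, mul_zero, sub_zero]
    · exact sub_nonneg.2 (le_mul_of_one_le_left (h.nonneg k) (mod_cast hk))
  have hzero : (n : ℝ) * p n - p n = 0 :=
    congrFun ((hasSum_zero_iff_of_nonneg hnonneg).1 hsub) n
  have hn1 : (n : ℝ) ≠ 1 := mod_cast (show n ≠ 1 by omega)
  exact hpn ((mul_eq_right₀ hpn).not.2 hn1 (sub_eq_zero.1 hzero)).elim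

lemma pgfC_one (h : IsCriticalOffspring p) : pgfC p 1 = 1 := by
  have := pgfC_ofReal p 1
  simpa [h.hasSum.tsum_eq] using this

lemma norm_pgfC_le_one (h : IsCriticalOffspring p) {w : ℂ} (hw : ‖w‖ ≤ 1) : ‖pgfC p w‖ ≤ 1 :=
  (norm_pgfC_le_tsum h.nonneg h.hasSum.summable hw).trans_eq h.hasSum.tsum_eq

lemma norm_pgfC_sub_le (h : IsCriticalOffspring p) {a b : ℂ} (ha : ‖a‖ ≤ 1) (hb : ‖b‖ ≤ 1) :
    ‖pgfC p a - pgfC p b‖ ≤ ‖a - b‖ := by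
  have := norm_pgfC_sub_pgfC_le h.nonneg h.hasSum.summable h.hasSum_mul.summable le_rfl ha hb
  simpa [h.hasSum_mul.tsum_eq] using this

lemma contractsInside_pgfC (h : IsCriticalOffspring p) (hn : ∃ n ≥ 2, p n ≠ 0) :
    ContractsInside (pgfC p) := by
  intro x hx0 hx1
  obtain ⟨n, hn, hpn⟩ := hn
  have hle : ∀ k, (∑ i ∈ Finset.range k, x ^ i) * p k ≤ k * p k := fun k =>
    mul_le_mul_of_nonneg_right (sum_range_pow_le hx0 hx1.le k) (h.nonneg k)
  have hnonneg : ∀ k, 0 ≤ (∑ i ∈ Finset.range k, x ^ i) * p k := fun k =>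
    mul_nonneg (by positivity) (h.nonneg k)
  have hlt : ∑' k, (∑ i ∈ Finset.range k, x ^ i) * p k < 1 := by
    rw [← h.hasSum_mul.tsum_eq]
    exact (h.hasSum_mul.summable.of_nonneg_of_le hnonneg hle).tsum_lt_tsum hle
      (mul_lt_mul_of_pos_right (sum_range_pow_lt hn hx0 hx1) ((h.nonneg n).lt_of_ne' hpn))
      h.hasSum_mul.summable
  exact ⟨⟨_, tsum_nonneg hnonneg⟩, hlt, fun a b ha hb =>
    norm_pgfC_sub_pgfC_le h.nonneg h.hasSum.summable h.hasSum_mul.summable hx1.le ha hb⟩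

variable {v γ : ℝ}

lemma hasSum_powTaylorRemainder (h : IsCriticalOffspring p)
    (hv : HasSum (fun k : ℕ => (k : ℝ) * (k - 1) * p k) v) {w : ℂ} (hw : ‖w‖ ≤ 1) :
    HasSum (fun k => (p k : ℂ) * powTaylorRemainder k w)
      (pgfC p w - w - (v / 2 : ℝ) * (1 - w) ^ 2) := by
  have hpgf := hasSum_pgfC h.nonneg h.hasSum.summable hw
  have hzeroth := Complex.hasSum_ofReal.2 h.hasSum
  have hfirst := (Complex.hasSum_ofReal.2 h.hasSum_mul).mul_right (1 - w)
  have hsecond := (Complex.hasSum_ofReal.2 hv).mul_right ((1 - w) ^ 2 / 2)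
  have hexpand : pgfC p w - w - (v / 2 : ℝ) * (1 - w) ^ 2 =
      pgfC p w - (((1 : ℝ) : ℂ) - ((1 : ℝ) : ℂ) * (1 - w) + v * ((1 - w) ^ 2 / 2)) := by
    push_cast
    ring
  rw [hexpand]
  refine (hpgf.sub ((hzeroth.sub hfirst).add hsecond)).congr_fun fun k => ?_
  push_cast [powTaylorRemainder]
  ring

lemma norm_remainder_sub_le (h : IsCriticalOffspring p)
    (hv : HasSum (fun k : ℕ => (k : ℝ) * (k - 1) * p k) v) (hγ0 : 0 ≤ γ) (hγ1 : γ ≤ 1)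
    (hmom : Summable fun k : ℕ => (k : ℝ) ^ (2 + γ) * p k) {a b : ℂ} {M : ℝ}
    (ha : ‖a‖ ≤ 1) (hb : ‖b‖ ≤ 1) (haM : ‖1 - a‖ ≤ M) (hbM : ‖1 - b‖ ≤ M) :
    ‖(pgfC p a - a - (v / 2 : ℝ) * (1 - a) ^ 2) - (pgfC p b - b - (v / 2 : ℝ) * (1 - b) ^ 2)‖ ≤
      (∑' k : ℕ, (k : ℝ) ^ (2 + γ) * p k) * (2 * (M * M ^ γ) * ‖a - b‖) := by
  rw [← ((h.hasSum_powTaylorRemainder hv ha).sub (h.hasSum_powTaylorRemainder hv hb)).tsum_eq]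
  refine tsum_of_norm_bounded (hmom.hasSum.mul_right _) fun k => ?_
  have hpk := h.nonneg k
  rw [← mul_sub, norm_mul, Complex.norm_real, Real.norm_of_nonneg hpk]
  calc p k * ‖powTaylorRemainder k a - powTaylorRemainder k b‖
      ≤ p k * (2 * (k : ℝ) ^ (2 + γ) * (M * M ^ γ) * ‖a - b‖) := by
        gcongr
        exact norm_powTaylorRemainder_sub_le hγ0 hγ1 ha hb haM hbM k
    _ = (k : ℝ) ^ (2 + γ) * p k * (2 * (M * M ^ γ) * ‖a - b‖) := by ring

lemma exists_isParabolicAtOne (h : IsCriticalOffspring p)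
    (hv : HasSum (fun k : ℕ => (k : ℝ) * (k - 1) * p k) v) (hv0 : 0 < v) (hγ0 : 0 < γ)
    (hγ1 : γ ≤ 1) (hmom : Summable fun k : ℕ => (k : ℝ) ^ (2 + γ) * p k) :
    ∃ t, IsParabolicAtOne (pgfC p) (v / 2) t := by
  have hμ : 0 ≤ ∑' k : ℕ, (k : ℝ) ^ (2 + γ) * p k :=
    tsum_nonneg fun k => mul_nonneg (by positivity) (h.nonneg k)
  have hlim : Tendsto (fun t : ℝ => (∑' k : ℕ, (k : ℝ) ^ (2 + γ) * p k) * (2 * t ^ γ))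
      (𝓝 0) (𝓝 0) := by
    refine Continuous.tendsto' ?_ _ _ (by rw [Real.zero_rpow hγ0.ne', mul_zero, mul_zero])
    exact continuous_const.mul (continuous_const.mul (Real.continuous_rpow_const hγ0.le))
  obtain ⟨t, hsmall, ht0, ht⟩ := (((hlim.eventually_le_const (show 0 < v / 2 / 16 by positivity)
    ).filter_mono nhdsWithin_le_nhds).and
      (Ioc_mem_nhdsGT (show (0 : ℝ) < 1 / 32 by norm_num))).exists
  refine ⟨t, half_pos hv0, ht0, ht, h.pgfC_one, fun a b => h.norm_pgfC_sub_le,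
    fun M hM a b ha hb haM hbM => ?_⟩
  have hM0 : 0 ≤ M := (norm_nonneg _).trans haM
  calc _ ≤ (∑' k : ℕ, (k : ℝ) ^ (2 + γ) * p k) * (2 * (M * M ^ γ) * ‖a - b‖) :=
        h.norm_remainder_sub_le hv hγ0.le hγ1 hmom ha hb haM hbM
    _ = (∑' k : ℕ, (k : ℝ) ^ (2 + γ) * p k) * (2 * M ^ γ) * M * ‖a - b‖ := by ring
    _ ≤ (∑' k : ℕ, (k : ℝ) ^ (2 + γ) * p k) * (2 * t ^ γ) * M * ‖a - b‖ := by gcongr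
    _ ≤ v / 2 / 16 * M * ‖a - b‖ := by gcongr

lemma eq_of_eq_mul_pgfC (h : IsCriticalOffspring p) {z a b : ℂ} (hz : ‖z‖ < 1) (ha : ‖a‖ ≤ 1)
    (hb : ‖b‖ ≤ 1) (haz : a = z * pgfC p a) (hbz : b = z * pgfC p b) : a = b := by
  have hle := mul_norm_sub_le_norm_sub_mul_sub (ρ := 1)
    (by rw [one_mul]; exact h.norm_pgfC_sub_le ha hb) z
  rw [sub_eq_zero.2 haz, sub_eq_zero.2 hbz, sub_zero, norm_zero, mul_one] at hle
  have := nonpos_of_mul_nonpos_right hle (sub_pos.2 hz)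
  exact sub_eq_zero.1 (norm_le_zero_iff.1 this)

lemma norm_lt_one_of_eq_mul_pgfC (h : IsCriticalOffspring p)
    (hspan : ∀ d : ℕ, (∀ k, p k ≠ 0 → d ∣ k) → d = 1) (h0 : p 0 ≠ 0) {z w : ℂ} (hz : ‖z‖ ≤ 1)
    (hz1 : z ≠ 1) (hw : ‖w‖ ≤ 1) (hwz : w = z * pgfC p w) : ‖w‖ < 1 := by
  refine hw.lt_of_ne fun hw1 => hz1 ?_
  have hnorm : ‖z‖ * ‖pgfC p w‖ = 1 := by rw [← norm_mul, ← hwz, hw1]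
  have hpgf : ‖pgfC p w‖ = 1 := by
    refine (h.norm_pgfC_le_one hw).antisymm ?_
    rw [← hnorm]
    exact mul_le_of_le_one_left (norm_nonneg _) hz
  have hw_one := eq_one_of_norm_pgfC_eq_one h.nonneg h.hasSum hspan h0 hw hpgf
  rw [hw_one, h.pgfC_one, mul_one] at hwz
  exact hwz.symm

end IsCriticalOffspring

/-! ### Asymptotics along the branch -/

namespace SqrtApproachOn

variable {Y F : ℂ → ℂ} {D : Set ℂ} {γ : ℝ}

lemma tendsto_principal (h : SqrtApproachOn Y D) : Tendsto Y (𝓟 D) (𝓟 (ball 0 1)) :=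
  tendsto_principal_principal.2 fun z hz => mem_ball_zero_iff.2 (h.norm_lt_one z hz)

lemma comp_isBigO (h : SqrtApproachOn Y D) (hγ : 0 ≤ γ)
    (hF : F =O[𝓟 (ball 0 1)] fun w => ‖1 - w‖ ^ γ) :
    (fun z => F (Y z)) =O[𝓟 D] fun z => ‖1 - z‖ ^ (γ / 2) := by
  have hpow : (fun z => ‖1 - Y z‖ ^ γ) =O[𝓟 D] fun z => ‖1 - z‖ ^ (γ / 2) := by
    refine (h.sq_norm_one_sub_isBigO.rpow (by positivity)
      (Eventually.of_forall fun z => norm_nonneg _)).congr_left fun z => ?_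
    rw [← Real.rpow_natCast_mul (norm_nonneg _), Nat.cast_ofNat, mul_div_cancel₀ γ two_ne_zero]
  exact (hF.comp_tendsto h.tendsto_principal).trans hpow

lemma comp_isBigO_of_nonpos (h : SqrtApproachOn Y D) (hD : 1 ∉ D) (hγ : γ ≤ 0)
    (hF : F =O[𝓟 (ball 0 1)] fun w => (1 - ‖w‖) ^ γ) :
    (fun z => F (Y z)) =O[𝓟 D] fun z => ‖1 - z‖ ^ (γ / 2) := by
  have hpos : ∀ z ∈ D, 0 < 1 - ‖Y z‖ := fun z hz => sub_pos.2 (h.norm_lt_one z hz)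
  have hpow : (fun z => (1 - ‖Y z‖) ^ γ) =O[𝓟 D] fun z => ‖1 - z‖ ^ (γ / 2) := by
    refine (isBigO_rpow_of_nonpos (e := γ / 2) (by linarith) ?_ ?_
      h.isBigO_sq_one_sub_norm).congr' ?_ .rfl
    · exact eventually_principal.2 fun z hz =>
        norm_pos_iff.2 (sub_ne_zero.2 fun h1 => hD (h1 ▸ hz))
    · exact Eventually.of_forall fun z => sq_nonneg _
    · refine eventually_principal.2 fun z hz => ?_
      dsimp only
      rw [← Real.rpow_natCast_mul (hpos z hz).le, Nat.cast_ofNat, mul_div_cancel₀ γ two_ne_zero]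
  exact (hF.comp_tendsto h.tendsto_principal).trans hpow

end SqrtApproachOn

lemma IsCriticalOffspring.exists_deltaDom_extension {p q : ℕ → ℝ} {v γ : ℝ}
    (h : IsCriticalOffspring p) (hspan : ∀ d : ℕ, (∀ k, p k ≠ 0 → d ∣ k) → d = 1)
    (hv : HasSum (fun k : ℕ => (k : ℝ) * (k - 1) * p k) v) (hv0 : 0 < v) (hγ0 : 0 < γ)
    (hγ1 : γ ≤ 1) (hmom : Summable fun k : ℕ => (k : ℝ) ^ (2 + γ) * p k) (hq : ∀ n, 0 ≤ q n)
    (hq1 : HasSum q 1) (hq0 : q 0 = 0)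
    (hfix : ∀ x ∈ Ioo (0 : ℝ) 1, pgfC q x = x * pgfC p (pgfC q x)) :
    ∃ R > 1, ∃ Y : ℂ → ℂ, EqOn Y (pgfC q) (ball 0 1) ∧
      DifferentiableOn ℂ Y (deltaDom R (Real.pi / 3)) ∧
      SqrtApproachOn Y (deltaDom R (Real.pi / 3)) := by
  have hn := exists_two_le_ne_zero_of_hasSum hv hv0.ne'
  have h0 := h.apply_zero_ne_zero hn
  obtain ⟨t, ht⟩ := h.exists_isParabolicAtOne hv hv0 hγ0 hγ1 hmom
  have hy {z : ℂ} := pgfC_eq_mul_pgfC (z := z) h.nonneg h.hasSum.summable hq hq1 hq0 hfix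
  have hyB {z : ℂ} (hz : ‖z‖ ≤ 1) : ‖pgfC q z‖ ≤ 1 :=
    (norm_pgfC_le_tsum hq hq1.summable hz).trans_eq hq1.tsum_eq
  obtain ⟨R, hR, Y, hYd, hYs, hY⟩ := exists_deltaDom_branch ht
    (diffContOnCl_pgfC h.nonneg h.hasSum.summable).differentiableOn
    (by rwa [pgfC_zero, Complex.ofReal_ne_zero]) (h.contractsInside_pgfC hn)
    (fun w => h.norm_pgfC_le_one) (diffContOnCl_pgfC hq hq1.summable).continuousOn_ball
    (fun z => hy) fun z hz hz1 =>
      h.norm_lt_one_of_eq_mul_pgfC hspan h0 hz hz1 (hyB hz) (hy hz)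
  refine ⟨R, hR, Y, fun z hz => ?_, hYd, hYs⟩
  have hzD := ball_subset_deltaDom (θ := Real.pi / 3) hR.le
    ⟨by positivity, by linarith [Real.pi_pos]⟩ hz
  rw [mem_ball_zero_iff] at hz
  exact h.eq_of_eq_mul_pgfC hz (hYs.norm_lt_one z hzD).le (hyB hz.le) (hY z hzD) (hy hz.le)

section Transfer

variable {p : ℕ → ℝ} {Y : ℂ → ℂ} {D : Set ℂ}

lemma SqrtApproachOn.isBigO_iteratedDeriv_pgfC_sub (hY : SqrtApproachOn Y D)
    (hp : ∀ k, 0 ≤ p k) (hs : Summable p) {m : ℕ} {γ c : ℝ} (hγ0 : 0 ≤ γ) (hγ1 : γ ≤ 1)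
    (hc : HasSum (fun k : ℕ => k.descFactorial m * p k) c)
    (hmom : Summable fun k : ℕ => (k : ℝ) ^ (m + γ) * p k) :
    (fun z => iteratedDeriv m (pgfC p) (Y z) - c) =O[𝓟 D] fun z => ‖1 - z‖ ^ (γ / 2) :=
  hY.comp_isBigO hγ0 (_root_.isBigO_iteratedDeriv_pgfC_sub hp hs hγ0 hγ1 hc hmom)

lemma SqrtApproachOn.isBigO_iteratedDeriv_pgfC (hY : SqrtApproachOn Y D) (hD : 1 ∉ D)
    (hp : ∀ k, 0 ≤ p k) (hs : Summable p) {m : ℕ} {s : ℝ} (hm : m ≠ 0) (hsm : s ≤ m)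
    (hmom : Summable fun k : ℕ => (k : ℝ) ^ s * p k) :
    (fun z => iteratedDeriv m (pgfC p) (Y z)) =O[𝓟 D] fun z => ‖1 - z‖ ^ ((s - m) / 2) :=
  hY.comp_isBigO_of_nonpos hD (by linarith) (_root_.isBigO_iteratedDeriv_pgfC hp hs hm hsm hmom)

lemma IsCriticalOffspring.isBigO_pgfC_sub_one (h : IsCriticalOffspring p)
    (hY : SqrtApproachOn Y D) :
    (fun z => pgfC p (Y z) - 1) =O[𝓟 D] fun z => ‖1 - z‖ ^ ((1 : ℝ) / 2) := by
  have := hY.isBigO_iteratedDeriv_pgfC_sub h.nonneg h.hasSum.summable (m := 0) zero_le_one le_rfl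
    (c := 1) (by simpa using h.hasSum) (by simpa using h.hasSum_mul.summable)
  simpa using this

lemma IsCriticalOffspring.isBigO_deriv_pgfC_sub_one (h : IsCriticalOffspring p)
    (hY : SqrtApproachOn Y D) (hmom : Summable fun k : ℕ => (k : ℝ) ^ (2 : ℝ) * p k) :
    (fun z => deriv (pgfC p) (Y z) - 1) =O[𝓟 D] fun z => ‖1 - z‖ ^ ((1 : ℝ) / 2) := by
  have := hY.isBigO_iteratedDeriv_pgfC_sub h.nonneg h.hasSum.summable (m := 1) zero_le_one le_rfl
    (c := 1) (by simpa using h.hasSum_mul) (by simpa [one_add_one_eq_two] using hmom)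
  simpa using this

end Transfer

/-- Under the standing hypotheses, there is a Δ-domain on which the tree-size
generating function `Y` is analytic with `|Y| < 1`, and on which
`Φ(Y(z)) = 1 + O(|1−z|^{1/2})`, `Φ'(Y(z)) = 1 + O(|1−z|^{1/2})`,
`Φ''(Y(z)) = σ² + O(|1−z|^{δ/2})`, and for each fixed `m ≥ 3`,
`Φ^{(m)}(Y(z)) = O(|1−z|^{δ/2+1−m/2})`. -/
theorem stmt4
    (p : ℕ → ℝ) (hp : ∀ k, 0 ≤ p k)
    (hpsum : ∑' k, p k = 1)
    (hcrit : ∑' k : ℕ, (k : ℝ) * p k = 1)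
    (hspan : ∀ d : ℕ, (∀ k, p k ≠ 0 → d ∣ k) → d = 1)
    (hσpos : 0 < ∑' k : ℕ, (k : ℝ) * ((k : ℝ) - 1) * p k)
    (δ : ℝ) (hδ0 : 0 < δ) (hδ1 : δ ≤ 1)
    (hmom : Summable (fun k : ℕ => (k : ℝ) ^ ((2:ℝ) + δ) * p k))
    (q : ℕ → ℝ) (hq0 : q 0 = 0) (hqnn : ∀ n, 0 ≤ q n)
    (hqsum : ∑' n, q n = 1)
    (hfix : ∀ z ∈ Set.Icc (0:ℝ) 1,
      (∑' n, q n * z ^ n) = z * ∑' k, p k * (∑' n, q n * z ^ n) ^ k) :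
    ∃ (R θ : ℝ) (Y : ℂ → ℂ), 1 < R ∧ θ ∈ Set.Ioo 0 (Real.pi / 2) ∧
      (∀ z : ℂ, ‖z‖ < 1 → Y z = ∑' n : ℕ, (q n : ℂ) * z ^ n) ∧
      DifferentiableOn ℂ Y (deltaDom R θ) ∧
      (∀ z ∈ deltaDom R θ, ‖Y z‖ < 1) ∧
      (∃ C : ℝ, ∀ z ∈ deltaDom R θ,
        ‖pgfC p (Y z) - 1‖ ≤ C * ‖1 - z‖ ^ ((1:ℝ)/2) ∧
        ‖deriv (pgfC p) (Y z) - 1‖ ≤ C * ‖1 - z‖ ^ ((1:ℝ)/2) ∧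
        ‖iteratedDeriv 2 (pgfC p) (Y z) -
            ((∑' k : ℕ, (k : ℝ) * ((k : ℝ) - 1) * p k : ℝ) : ℂ)‖ ≤ C * ‖1 - z‖ ^ (δ/2)) ∧
      (∀ m : ℕ, 3 ≤ m → ∃ C : ℝ, ∀ z ∈ deltaDom R θ,
        ‖iteratedDeriv m (pgfC p) (Y z)‖ ≤ C * ‖1 - z‖ ^ (δ/2 + 1 - (m : ℝ)/2)) := by
  have h : IsCriticalOffspring p := ⟨hp, hasSum_of_tsum_eq_of_ne_zero hpsum one_ne_zero,
    hasSum_of_tsum_eq_of_ne_zero hcrit one_ne_zero⟩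
  have hv := hasSum_of_tsum_eq_of_ne_zero rfl hσpos.ne'
  obtain ⟨R, hR, Y, hYq, hYd, hY⟩ := h.exists_deltaDom_extension hspan hv hσpos hδ0 hδ1 hmom
    hqnn (hasSum_of_tsum_eq_of_ne_zero hqsum one_ne_zero) hq0 fun x hx => by
      rw [pgfC_ofReal, pgfC_ofReal, ← Complex.ofReal_mul, ← hfix x (Ioo_subset_Icc_self hx)]
  have hpow (e : ℝ) : ∀ z ∈ deltaDom R (Real.pi / 3), 0 ≤ ‖1 - z‖ ^ e := fun z _ => by positivity
  refine ⟨R, Real.pi / 3, Y, hR, ⟨by positivity, by linarith [Real.pi_pos]⟩,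
    fun z hz => hYq (mem_ball_zero_iff.2 hz), hYd, hY.norm_lt_one, ?_, fun m hm => ?_⟩
  · have h0 := h.isBigO_pgfC_sub_one hY
    have h1 := h.isBigO_deriv_pgfC_sub_one hY
      (summable_rpow_mul_of_le hp two_pos (by linarith) hmom)
    have h2 := hY.isBigO_iteratedDeriv_pgfC_sub hp h.hasSum.summable (m := 2) hδ0.le hδ1
      (by simpa only [Nat.cast_descFactorial_two] using hv) hmom
    obtain ⟨C, hC0, hC1, hC2⟩ := ((eventually_norm_le_mul_of_isBigO_principal h0 (hpow _)).and
      ((eventually_norm_le_mul_of_isBigO_principal h1 (hpow _)).and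
        (eventually_norm_le_mul_of_isBigO_principal h2 (hpow _)))).exists
    exact ⟨C, fun z hz => ⟨hC0 z hz, hC1 z hz, hC2 z hz⟩⟩
  · have hm' : (3 : ℝ) ≤ m := mod_cast hm
    have hO := hY.isBigO_iteratedDeriv_pgfC (m := m) (fun h1 => h1.2.1 rfl) hp
      h.hasSum.summable (by omega) (by linarith) hmom
    rw [show δ / 2 + 1 - (m : ℝ) / 2 = (2 + δ - m) / 2 by ring]
    exact (eventually_norm_le_mul_of_isBigO_principal hO (hpow _)).exists
end

section
/- Let (p_k^{(1)}) and (p_k^{(2)}) be critical offspring distributions with variances σ_1², σ_2² ∈ (0,∞), pgfs Φ_1, Φ_2, and tree-size probabilities (q_n^{(1)}), (q_n^{(2)}). Suppose Φ_1(t) ≤ Φ_2(t) for all t ∈ (0,1) and Φ_1(t_0) < Φ_2(t_0) for at least one t_0 ∈ (0,1). Then: (i) for every real α < 0, ∑_{n≥1} n^α q_n^{(1)} < ∑_{n≥1} n^α q_n^{(2)}; (ii) for every real α with 0 < α < 1/2, ∑_{n≥1} n^α q_n^{(1)} > ∑_{n≥1} n^α q_n^{(2)}; (iii) ∑_{n≥1}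 q_n^{(1)} log n > ∑_{n≥1} q_n^{(2)} log n. -/
/-!
Write `y` for the tree-size generating function. Since `y = z Φ(y)`, the map `t ↦ t / Φ(t)` inverts
`y`, so a larger `Φ` gives a larger `y`. On the other hand, with `f_α(x) = ∫₁ˣ t^(α-1) dt`,

  `Γ(1 - α) ∑ qₙ f_α(n) = ∫₀^∞ s^(-α-1) (e^(-s) - y(e^(-s))) ds`,

which decreases strictly as `y` grows. As `f_α(n)` is `(n^α - 1) / α` for `α ≠ 0` and `log n` for
`α = 0`, this yields all three comparisons, once the integral is known to be finite for `α < 1/2`.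
Near `s = 0` this follows from `1 - y(z) = O(√(1 - z))`, that is, from a quadratic lower bound
for `Φ(t) - t`: almost sure finiteness of the tree gives `t ≤ Φ(t)`, and the convexity of
`(Φ(t) - p₀) / t` improves this to `t + p₀ (1 - t)² / 2 ≤ Φ(t)`.
-/

open MeasureTheory Set
open scoped ENNReal

section GeneratingFunction

/-- The generating function `∑ aₙ tⁿ` of a real sequence. -/
noncomputable def genFun (a : ℕ → ℝ) (t : ℝ) : ℝ := ∑' n, a n * t ^ n

variable {a : ℕ → ℝ} {t : ℝ}

lemma hasSum_of_tsum_eq {c : ℝ} (hc : c ≠ 0) (h : ∑' n, a n = c) : HasSum a c := by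
  refine h ▸ Summable.hasSum (by_contra fun hs => hc ?_)
  rw [← h, tsum_eq_zero_of_not_summable hs]

@[simp]
lemma genFun_zero_right : genFun a 0 = a 0 := by
  rw [genFun, tsum_eq_single 0 fun n hn => by simp [hn], pow_zero, mul_one]

@[simp]
lemma genFun_one_right : genFun a 1 = ∑' n, a n := by
  simp only [genFun, one_pow, mul_one]

lemma hasSum_mul_pow (ha : ∀ n, 0 ≤ a n) (hs : Summable a) (ht : t ∈ Icc (0 : ℝ) 1) :
    HasSum (fun n => a n * t ^ n) (genFun a t) :=
  (hs.of_nonneg_of_le (fun n => mul_nonneg (ha n) (pow_nonneg ht.1 n))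
    fun n => mul_le_of_le_one_right (ha n) (pow_le_one₀ ht.1 ht.2)).hasSum

lemma continuousOn_genFun (ha : ∀ n, 0 ≤ a n) (hs : Summable a) :
    ContinuousOn (genFun a) (Icc 0 1) := by
  refine continuousOn_tsum (fun n => by fun_prop) hs fun n t ht => ?_
  rw [Real.norm_of_nonneg (mul_nonneg (ha n) (pow_nonneg ht.1 n))]
  exact mul_le_of_le_one_right (ha n) (pow_le_one₀ ht.1 ht.2)

lemma midpoint_one_pow_le (ht : 0 ≤ t) (k : ℕ) : ((1 + t) / 2) ^ k ≤ (1 + t ^ k) / 2 := by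
  have hconv := (convexOn_pow k).2 (mem_Ici.2 zero_le_one) (mem_Ici.2 ht)
    one_half_pos.le one_half_pos.le (add_halves (1 : ℝ))
  simp only [smul_eq_mul, one_pow, ← mul_add] at hconv
  rw [show (1 + t) / 2 = 1 / 2 * (1 + t) by ring]
  linarith

-- This is the midpoint convexity of `(∑ aₖ tᵏ - a₀) / t` on `[t, 1]`, cleared of denominators.
lemma two_mul_genFun_midpoint_le (ha : ∀ n, 0 ≤ a n) (hs : Summable a) (ht : t ∈ Icc (0 : ℝ) 1) :
    2 * t * genFun a ((1 + t) / 2) - t * ((1 + t) / 2) * ∑' n, a n + a 0 * ((1 - t) ^ 2 / 2) ≤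
      (1 + t) / 2 * genFun a t := by
  set m := (1 + t) / 2 with hm
  have hm_mem : m ∈ Icc (0 : ℝ) 1 := ⟨by linarith [ht.1], by linarith [ht.2]⟩
  have hleft := (((hasSum_mul_pow ha hs hm_mem).mul_left (2 * t)).sub
    (hs.hasSum.mul_left (t * m))).add (hasSum_ite_eq 0 (a 0 * ((1 - t) ^ 2 / 2)))
  refine hasSum_le (fun k => ?_) hleft ((hasSum_mul_pow ha hs ht).mul_left m)
  cases k with
  | zero => simp only [if_true, pow_zero, hm]; exact le_of_eq (by ring)
  | succ k =>
    have hnonneg : 0 ≤ a (k + 1) * (t * m) :=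
      mul_nonneg (ha _) (mul_nonneg ht.1 hm_mem.1)
    have hpow : 2 * m ^ k - 1 ≤ t ^ k := by linarith [midpoint_one_pow_le ht.1 k]
    simp only [Nat.add_eq_zero_iff, one_ne_zero, and_false, if_false, add_zero]
    calc 2 * t * (a (k + 1) * m ^ (k + 1)) - t * m * a (k + 1)
        = a (k + 1) * (t * m) * (2 * m ^ k - 1) := by ring
      _ ≤ a (k + 1) * (t * m) * t ^ k := mul_le_mul_of_nonneg_left hpow hnonneg
      _ = m * (a (k + 1) * t ^ (k + 1)) := by ring

lemma add_sq_le_genFun (ha : ∀ n, 0 ≤ a n) (hsum : HasSum a 1) (ht : t ∈ Icc (0 : ℝ) 1)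
    (hmid : (1 + t) / 2 ≤ genFun a ((1 + t) / 2)) :
    t + a 0 / 2 * (1 - t) ^ 2 ≤ genFun a t := by
  have hpos : 0 < (1 + t) / 2 := by linarith [ht.1]
  have hconv := two_mul_genFun_midpoint_le ha hsum.summable ht
  rw [hsum.tsum_eq, mul_one] at hconv
  refine le_of_mul_le_mul_left ?_ hpos
  calc (1 + t) / 2 * (t + a 0 / 2 * (1 - t) ^ 2)
      ≤ (1 + t) / 2 * t + 1 * (a 0 / 2 * (1 - t) ^ 2) := by
        rw [mul_add]
        have := ha 0
        gcongr
        linarith [ht.2]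
    _ = 2 * t * ((1 + t) / 2) - t * ((1 + t) / 2) + a 0 * ((1 - t) ^ 2 / 2) := by ring
    _ ≤ 2 * t * genFun a ((1 + t) / 2) - t * ((1 + t) / 2) + a 0 * ((1 - t) ^ 2 / 2) := by
        have := ht.1
        gcongr
    _ ≤ (1 + t) / 2 * genFun a t := hconv

end GeneratingFunction

/-- `q` is a probability law on the positive integers. -/
structure IsPosLaw (q : ℕ → ℝ) : Prop where
  nonneg : ∀ n, 0 ≤ q n
  zero : q 0 = 0
  tsum_eq_one : ∑' n, q n = 1

namespace IsPosLaw

variable {q : ℕ → ℝ} {z t : ℝ}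

lemma hasSum (h : IsPosLaw q) : HasSum q 1 := hasSum_of_tsum_eq one_ne_zero h.tsum_eq_one

lemma hasSum_genFun (h : IsPosLaw q) (hz : z ∈ Icc (0 : ℝ) 1) :
    HasSum (fun n => q n * z ^ n) (genFun q z) :=
  hasSum_mul_pow h.nonneg h.hasSum.summable hz

lemma exists_pos (h : IsPosLaw q) : ∃ n, n ≠ 0 ∧ 0 < q n := by
  by_contra! hq
  have hq_zero : ∀ n, q n = 0 := fun n => by
    rcases eq_or_ne n 0 with rfl | hn
    · exact h.zero
    · exact le_antisymm (hq n hn) (h.nonneg n)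
  simpa [hq_zero] using h.tsum_eq_one

lemma strictMonoOn_genFun (h : IsPosLaw q) : StrictMonoOn (genFun q) (Icc 0 1) := by
  intro s hs t ht hst
  obtain ⟨n, hn, hq⟩ := h.exists_pos
  exact Summable.tsum_lt_tsum
    (fun m => mul_le_mul_of_nonneg_left (pow_le_pow_left₀ hs.1 hst.le m) (h.nonneg m))
    (mul_lt_mul_of_pos_left (pow_lt_pow_left₀ hst hs.1 hn) hq)
    (h.hasSum_genFun hs).summable (h.hasSum_genFun ht).summable

lemma genFun_mem_Ioo (h : IsPosLaw q) (hz : z ∈ Ioo (0 : ℝ) 1) : genFun q z ∈ Ioo (0 : ℝ) 1 := by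
  constructor
  · simpa [h.zero] using h.strictMonoOn_genFun (by simp) (Ioo_subset_Icc_self hz) hz.1
  · simpa [h.tsum_eq_one] using h.strictMonoOn_genFun (Ioo_subset_Icc_self hz) (by simp) hz.2

lemma exists_genFun_eq (h : IsPosLaw q) (ht : t ∈ Ioo (0 : ℝ) 1) :
    ∃ z ∈ Ioo (0 : ℝ) 1, genFun q z = t := by
  have hivt := intermediate_value_Ioo zero_le_one
    (continuousOn_genFun h.nonneg h.hasSum.summable)
  rw [genFun_zero_right, h.zero, genFun_one_right, h.tsum_eq_one] at hivt
  exact hivt ht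

lemma genFun_le_self (h : IsPosLaw q) (hz : z ∈ Icc (0 : ℝ) 1) : genFun q z ≤ z := by
  refine (hasSum_le (fun n => ?_) (h.hasSum_genFun hz) (h.hasSum.mul_right z)).trans_eq (one_mul z)
  rcases eq_or_ne n 0 with rfl | hn
  · simp [h.zero]
  · exact mul_le_mul_of_nonneg_left (pow_le_of_le_one hz.1 hz.2 hn) (h.nonneg n)

end IsPosLaw

/-- `q` is the law of the total size of a Galton–Watson tree with offspring weights `p`, and this
tree is almost surely finite. Evaluating the functional equation at `z = 0` and `z = 1` gives
`q 0 = 0` and `∑ p k = 1`. -/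
structure IsTreeSizeLaw (p q : ℕ → ℝ) : Prop where
  offspring_nonneg : ∀ k, 0 ≤ p k
  nonneg : ∀ n, 0 ≤ q n
  tsum_eq_one : ∑' n, q n = 1
  functional_eq : ∀ z ∈ Icc (0 : ℝ) 1, genFun q z = z * genFun p (genFun q z)

namespace IsTreeSizeLaw

variable {p q : ℕ → ℝ} {z t : ℝ}

lemma isPosLaw (h : IsTreeSizeLaw p q) : IsPosLaw q where
  nonneg := h.nonneg
  zero := by simpa using h.functional_eq 0 (by simp)
  tsum_eq_one := h.tsum_eq_one

lemma hasSum_offspring (h : IsTreeSizeLaw p q) : HasSum p 1 := by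
  refine hasSum_of_tsum_eq one_ne_zero ?_
  simpa [h.tsum_eq_one] using (h.functional_eq 1 (by simp)).symm

lemma exists_eq_mul_genFun (h : IsTreeSizeLaw p q) (ht : t ∈ Ioo (0 : ℝ) 1) :
    ∃ w ∈ Ioo (0 : ℝ) 1, genFun q w = t ∧ t = w * genFun p t := by
  obtain ⟨w, hw, rfl⟩ := h.isPosLaw.exists_genFun_eq ht
  exact ⟨w, hw, rfl, h.functional_eq w (Ioo_subset_Icc_self hw)⟩

lemma self_lt_genFun_offspring (h : IsTreeSizeLaw p q) (ht : t ∈ Ioo (0 : ℝ) 1) :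
    t < genFun p t := by
  obtain ⟨w, hw, -, hfix⟩ := h.exists_eq_mul_genFun ht
  have hΦ : 0 < genFun p t := pos_of_mul_pos_right (hfix ▸ ht.1) hw.1.le
  exact hfix.trans_lt (mul_lt_of_lt_one_left hΦ hw.2)

lemma genFun_offspring_pos (h : IsTreeSizeLaw p q) (ht : t ∈ Ioo (0 : ℝ) 1) : 0 < genFun p t :=
  ht.1.trans (h.self_lt_genFun_offspring ht)

lemma le_genFun_iff (h : IsTreeSizeLaw p q) (hz : z ∈ Ioo (0 : ℝ) 1) (ht : t ∈ Ioo (0 : ℝ) 1) :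
    t ≤ genFun q z ↔ t ≤ z * genFun p t := by
  obtain ⟨w, hw, hwt, hfix⟩ := h.exists_eq_mul_genFun ht
  calc t ≤ genFun q z ↔ genFun q w ≤ genFun q z := by rw [hwt]
    _ ↔ w ≤ z := h.isPosLaw.strictMonoOn_genFun.le_iff_le
        (Ioo_subset_Icc_self hw) (Ioo_subset_Icc_self hz)
    _ ↔ w * genFun p t ≤ z * genFun p t :=
        (mul_le_mul_iff_left₀ (h.genFun_offspring_pos ht)).symm
    _ ↔ t ≤ z * genFun p t := by rw [← hfix]

lemma lt_genFun_iff (h : IsTreeSizeLaw p q) (hz : z ∈ Ioo (0 : ℝ) 1) (ht : t ∈ Ioo (0 : ℝ) 1) :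
    t < genFun q z ↔ t < z * genFun p t := by
  obtain ⟨w, hw, hwt, hfix⟩ := h.exists_eq_mul_genFun ht
  calc t < genFun q z ↔ genFun q w < genFun q z := by rw [hwt]
    _ ↔ w < z := h.isPosLaw.strictMonoOn_genFun.lt_iff_lt
        (Ioo_subset_Icc_self hw) (Ioo_subset_Icc_self hz)
    _ ↔ w * genFun p t < z * genFun p t :=
        (mul_lt_mul_iff_left₀ (h.genFun_offspring_pos ht)).symm
    _ ↔ t < z * genFun p t := by rw [← hfix]

lemma offspring_zero_pos (h : IsTreeSizeLaw p q) : 0 < p 0 := by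
  refine (h.offspring_nonneg 0).lt_of_ne' fun hp0 => ?_
  have hp : IsPosLaw p := ⟨h.offspring_nonneg, hp0, h.hasSum_offspring.tsum_eq⟩
  have hmem : (1 / 2 : ℝ) ∈ Ioo (0 : ℝ) 1 := by norm_num
  exact (h.self_lt_genFun_offspring hmem).not_ge (hp.genFun_le_self (Ioo_subset_Icc_self hmem))

lemma one_sub_genFun_le_sqrt (h : IsTreeSizeLaw p q) (hz : z ∈ Ioo (0 : ℝ) 1) :
    1 - genFun q z ≤ √(2 / p 0 * (1 - z)) := by
  have hy := h.isPosLaw.genFun_mem_Ioo hz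
  have hyz := h.isPosLaw.genFun_le_self (Ioo_subset_Icc_self hz)
  have hfix := h.functional_eq z (Ioo_subset_Icc_self hz)
  set y := genFun q z
  have hmid : (1 + y) / 2 ∈ Ioo (0 : ℝ) 1 := ⟨by linarith [hy.1], by linarith [hy.2]⟩
  have hΦ : y + p 0 / 2 * (1 - y) ^ 2 ≤ genFun p y :=
    add_sq_le_genFun h.offspring_nonneg h.hasSum_offspring (Ioo_subset_Icc_self hy)
      (h.self_lt_genFun_offspring hmid).le
  have hquad : p 0 / 2 * (1 - y) ^ 2 ≤ 1 - z := by
    refine le_of_mul_le_mul_left ?_ hz.1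
    calc z * (p 0 / 2 * (1 - y) ^ 2) ≤ z * (genFun p y - y) :=
          mul_le_mul_of_nonneg_left (by linarith) hz.1.le
      _ = y * (1 - z) := by rw [mul_sub, ← hfix]; ring
      _ ≤ z * (1 - z) := mul_le_mul_of_nonneg_right hyz (sub_nonneg.2 hz.2.le)
  refine Real.le_sqrt_of_sq_le ?_
  have hp0 := h.offspring_zero_pos
  calc (1 - y) ^ 2 = 2 / p 0 * (p 0 / 2 * (1 - y) ^ 2) := by field_simp
    _ ≤ 2 / p 0 * (1 - z) := by gcongr

lemma sub_genFun_le_mul_sqrt (h : IsTreeSizeLaw p q) (hz : z ∈ Ioo (0 : ℝ) 1) :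
    z - genFun q z ≤ z * √(2 / p 0 * (1 - z)) :=
  calc z - genFun q z ≤ z - z * genFun q z :=
        sub_le_sub_left (mul_le_of_le_one_left (h.isPosLaw.genFun_mem_Ioo hz).1.le hz.2.le) z
    _ = z * (1 - genFun q z) := by ring
    _ ≤ z * √(2 / p 0 * (1 - z)) :=
        mul_le_mul_of_nonneg_left (h.one_sub_genFun_le_sqrt hz) hz.1.le

section Comparison

variable {p₁ p₂ q₁ q₂ : ℕ → ℝ} {z : ℝ}

lemma genFun_le_genFun (h₁ : IsTreeSizeLaw p₁ q₁) (h₂ : IsTreeSizeLaw p₂ q₂)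
    (hz : z ∈ Ioo (0 : ℝ) 1) (hΦ : genFun p₁ (genFun q₁ z) ≤ genFun p₂ (genFun q₁ z)) :
    genFun q₁ z ≤ genFun q₂ z := by
  refine (h₂.le_genFun_iff hz (h₁.isPosLaw.genFun_mem_Ioo hz)).2 ?_
  exact (h₁.functional_eq z (Ioo_subset_Icc_self hz)).trans_le
    (mul_le_mul_of_nonneg_left hΦ hz.1.le)

lemma genFun_lt_genFun (h₁ : IsTreeSizeLaw p₁ q₁) (h₂ : IsTreeSizeLaw p₂ q₂)
    (hz : z ∈ Ioo (0 : ℝ) 1) (hΦ : genFun p₁ (genFun q₁ z) < genFun p₂ (genFun q₁ z)) :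
    genFun q₁ z < genFun q₂ z := by
  refine (h₂.lt_genFun_iff hz (h₁.isPosLaw.genFun_mem_Ioo hz)).2 ?_
  exact (h₁.functional_eq z (Ioo_subset_Icc_self hz)).trans_lt (mul_lt_mul_of_pos_left hΦ hz.1)

end Comparison

end IsTreeSizeLaw

section BoxCox

/-- The Box–Cox transform of `x > 0`, which is `(x ^ α - 1) / α` for `α ≠ 0` and `log x` for
`α = 0`. The integral form treats power and logarithmic moments at once. -/
noncomputable def boxCox (α x : ℝ) : ℝ := ∫ t in (1 : ℝ)..x, t ^ (α - 1)

variable {α x s : ℝ}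

lemma zero_notMem_uIcc_one (hx : 0 < x) : (0 : ℝ) ∉ uIcc 1 x := notMem_uIcc_of_lt one_pos hx

lemma boxCox_nonneg (hx : 1 ≤ x) : 0 ≤ boxCox α x :=
  intervalIntegral.integral_nonneg hx fun _ ht => Real.rpow_nonneg (zero_le_one.trans ht.1) _

lemma boxCox_zero_left (hx : 0 < x) : boxCox 0 x = Real.log x := by
  simp only [boxCox, zero_sub, Real.rpow_neg_one]
  rw [integral_inv (zero_notMem_uIcc_one hx), div_one]

lemma rpow_eq_one_add_mul_boxCox (hα : α ≠ 0) (hx : 0 < x) : x ^ α = 1 + α * boxCox α x := by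
  have hα' : α - 1 ≠ -1 := fun h => hα (by linarith)
  rw [boxCox, integral_rpow (Or.inr ⟨hα', zero_notMem_uIcc_one hx⟩), sub_add_cancel, Real.one_rpow]
  field_simp
  ring

lemma ofReal_Gamma_mul_rpow_sub_one (hα : α < 1) (hx : 0 < x) :
    ENNReal.ofReal (Real.Gamma (1 - α) * x ^ (α - 1)) =
      ∫⁻ s in Ioi (0 : ℝ), ENNReal.ofReal (s ^ (-α) * Real.exp (-(x * s))) := by
  have hint : ∫ s in Ioi (0 : ℝ), s ^ (-α) * Real.exp (-(x * s)) =
      Real.Gamma (1 - α) * x ^ (α - 1) := by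
    have hGamma := Real.integral_rpow_mul_exp_neg_mul_Ioi (sub_pos.2 hα) hx
    rwa [sub_sub_cancel_left, one_div, Real.inv_rpow hx.le, ← Real.rpow_neg hx.le, neg_sub,
      mul_comm] at hGamma
  have hpos : 0 < Real.Gamma (1 - α) * x ^ (α - 1) :=
    mul_pos (Real.Gamma_pos_of_pos (sub_pos.2 hα)) (Real.rpow_pos_of_pos hx _)
  rw [← hint]
  refine ofReal_integral_eq_lintegral_ofReal
    (Integrable.of_integral_ne_zero (hint ▸ hpos.ne')) ?_
  filter_upwards [ae_restrict_mem measurableSet_Ioi] with s hs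
  exact mul_nonneg (Real.rpow_nonneg (le_of_lt hs) _) (Real.exp_nonneg _)

lemma lintegral_Ioc_exp_neg_mul (hs : 0 < s) (hx : 1 ≤ x) :
    ∫⁻ t in Ioc 1 x, ENNReal.ofReal (Real.exp (-(t * s))) =
      ENNReal.ofReal ((Real.exp (-s) - Real.exp (-(x * s))) / s) := by
  have hint : ∫ t in (1 : ℝ)..x, Real.exp (-(t * s)) =
      (Real.exp (-s) - Real.exp (-(x * s))) / s := by
    simp only [← mul_neg]
    rw [intervalIntegral.integral_comp_mul_right _ (neg_ne_zero.2 hs.ne'), integral_exp, one_mul,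
      smul_eq_mul]
    field_simp
    ring
  have hcont : Continuous fun t : ℝ => Real.exp (-(t * s)) := by fun_prop
  rw [← hint, intervalIntegral.integral_of_le hx]
  exact (ofReal_integral_eq_lintegral_ofReal hcont.integrableOn_Ioc
    (Filter.Eventually.of_forall fun _ => Real.exp_nonneg _)).symm

lemma ofReal_Gamma_mul_boxCox_eq_lintegral_Ioc (hα : α < 1) (hx : 1 ≤ x) :
    ENNReal.ofReal (Real.Gamma (1 - α) * boxCox α x) =
      ∫⁻ t in Ioc 1 x, ENNReal.ofReal (Real.Gamma (1 - α) * t ^ (α - 1)) := by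
  have hint : IntervalIntegrable (fun t : ℝ => Real.Gamma (1 - α) * t ^ (α - 1)) volume 1 x :=
    (intervalIntegral.intervalIntegrable_rpow
      (Or.inr (zero_notMem_uIcc_one (one_pos.trans_le hx)))).const_mul _
  rw [boxCox, ← intervalIntegral.integral_const_mul, intervalIntegral.integral_of_le hx]
  refine ofReal_integral_eq_lintegral_ofReal hint.1 ?_
  filter_upwards [ae_restrict_mem measurableSet_Ioc] with t ht
  exact mul_nonneg (Real.Gamma_pos_of_pos (sub_pos.2 hα)).le
    (Real.rpow_nonneg (zero_le_one.trans ht.1.le) _)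

lemma ofReal_Gamma_mul_boxCox (hα : α < 1) (hx : 1 ≤ x) :
    ENNReal.ofReal (Real.Gamma (1 - α) * boxCox α x) =
      ∫⁻ s in Ioi (0 : ℝ),
        ENNReal.ofReal (s ^ (-α - 1) * (Real.exp (-s) - Real.exp (-(x * s)))) := by
  calc ENNReal.ofReal (Real.Gamma (1 - α) * boxCox α x)
      = ∫⁻ t in Ioc 1 x, ENNReal.ofReal (Real.Gamma (1 - α) * t ^ (α - 1)) :=
        ofReal_Gamma_mul_boxCox_eq_lintegral_Ioc hα hx
    _ = ∫⁻ t in Ioc 1 x, ∫⁻ s in Ioi (0 : ℝ),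
          ENNReal.ofReal (s ^ (-α) * Real.exp (-(t * s))) :=
        setLIntegral_congr_fun measurableSet_Ioc fun t ht =>
          ofReal_Gamma_mul_rpow_sub_one hα (one_pos.trans ht.1)
    _ = ∫⁻ s in Ioi (0 : ℝ), ∫⁻ t in Ioc 1 x,
          ENNReal.ofReal (s ^ (-α) * Real.exp (-(t * s))) :=
        lintegral_lintegral_swap (by unfold Function.uncurry; fun_prop)
    _ = ∫⁻ s in Ioi (0 : ℝ),
          ENNReal.ofReal (s ^ (-α - 1) * (Real.exp (-s) - Real.exp (-(x * s)))) := by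
        refine setLIntegral_congr_fun measurableSet_Ioi fun s (hs : 0 < s) => ?_
        have hw : 0 ≤ s ^ (-α) := Real.rpow_nonneg hs.le _
        simp only [ENNReal.ofReal_mul hw]
        rw [lintegral_const_mul _ (by fun_prop), lintegral_Ioc_exp_neg_mul hs hx,
          ← ENNReal.ofReal_mul hw, Real.rpow_sub_one hs.ne', div_mul_eq_mul_div, mul_div_assoc]

end BoxCox

section LaplaceGap

/-- The density `s ^ (-α - 1) * E[exp (-s) - exp (-N * s)]` in the scale `s` of the Box–Cox moment
of order `α` of a random variable `N` with law `q`, up to the constant `Γ(1 - α)`. -/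
noncomputable def laplaceGap (q : ℕ → ℝ) (α s : ℝ) : ℝ :=
  s ^ (-α - 1) * (Real.exp (-s) - genFun q (Real.exp (-s)))

lemma exp_neg_mem_Ioo {s : ℝ} (hs : 0 < s) : Real.exp (-s) ∈ Ioo (0 : ℝ) 1 :=
  ⟨Real.exp_pos _, Real.exp_lt_one_iff.2 (neg_neg_of_pos hs)⟩

namespace IsPosLaw

variable {q : ℕ → ℝ} {α s : ℝ}

lemma laplaceGap_nonneg (h : IsPosLaw q) (hs : 0 < s) : 0 ≤ laplaceGap q α s :=
  mul_nonneg (Real.rpow_nonneg hs.le _)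
    (sub_nonneg.2 (h.genFun_le_self (Ioo_subset_Icc_self (exp_neg_mem_Ioo hs))))

lemma continuousOn_laplaceGap (h : IsPosLaw q) : ContinuousOn (laplaceGap q α) (Ioi 0) := by
  have hweight : ContinuousOn (fun s : ℝ => s ^ (-α - 1)) (Ioi 0) :=
    continuousOn_id.rpow_const fun s hs => Or.inl (ne_of_gt hs)
  have hexp : ContinuousOn (fun s : ℝ => Real.exp (-s)) (Ioi 0) := by fun_prop
  have hgen : ContinuousOn (fun s : ℝ => genFun q (Real.exp (-s))) (Ioi 0) :=
    (continuousOn_genFun h.nonneg h.hasSum.summable).comp hexp fun s hs =>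
      Ioo_subset_Icc_self (exp_neg_mem_Ioo hs)
  exact hweight.mul (hexp.sub hgen)

lemma hasSum_laplaceGap (h : IsPosLaw q) (hs : 0 < s) :
    HasSum (fun n : ℕ => q n * (s ^ (-α - 1) * (Real.exp (-s) - Real.exp (-(n * s)))))
      (laplaceGap q α s) := by
  have hgen := h.hasSum_genFun (Ioo_subset_Icc_self (exp_neg_mem_Ioo hs))
  have hsum := ((h.hasSum.mul_right (Real.exp (-s))).sub hgen).mul_left (s ^ (-α - 1))
  rw [one_mul] at hsum
  refine hsum.congr_fun fun n => ?_
  rw [← mul_neg, Real.exp_nat_mul]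
  ring

lemma ofReal_laplaceGap (h : IsPosLaw q) (hs : 0 < s) :
    ENNReal.ofReal (laplaceGap q α s) = ∑' n : ℕ, ENNReal.ofReal (q n) *
      ENNReal.ofReal (s ^ (-α - 1) * (Real.exp (-s) - Real.exp (-(n * s)))) := by
  have hsum := h.hasSum_laplaceGap (α := α) hs
  rw [← hsum.tsum_eq, ENNReal.ofReal_tsum_of_nonneg (fun n => ?_) hsum.summable]
  · simp only [ENNReal.ofReal_mul (h.nonneg _)]
  · rcases n.eq_zero_or_pos with rfl | hn
    · simp [h.zero]
    · have hexp : Real.exp (-(n * s)) ≤ Real.exp (-s) :=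
        Real.exp_le_exp.2 (neg_le_neg (le_mul_of_one_le_left hs.le (Nat.one_le_cast.2 hn)))
      exact mul_nonneg (h.nonneg n)
        (mul_nonneg (Real.rpow_nonneg hs.le _) (sub_nonneg.2 hexp))

lemma mul_boxCox_nonneg (h : IsPosLaw q) (n : ℕ) : 0 ≤ q n * boxCox α n := by
  rcases n.eq_zero_or_pos with rfl | hn
  · simp [h.zero]
  · exact mul_nonneg (h.nonneg n) (boxCox_nonneg (Nat.one_le_cast.2 hn))

lemma lintegral_laplaceGap (h : IsPosLaw q) (hα : α < 1) :
    ∫⁻ s in Ioi (0 : ℝ), ENNReal.ofReal (laplaceGap q α s) =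
      ∑' n : ℕ, ENNReal.ofReal (Real.Gamma (1 - α) * (q n * boxCox α n)) := by
  rw [setLIntegral_congr_fun measurableSet_Ioi fun s hs => h.ofReal_laplaceGap hs,
    lintegral_tsum fun n => by fun_prop]
  congr 1 with n
  rw [lintegral_const_mul _ (by fun_prop)]
  rcases n.eq_zero_or_pos with rfl | hn
  · simp [h.zero]
  · rw [← ofReal_Gamma_mul_boxCox hα (Nat.one_le_cast.2 hn), ← ENNReal.ofReal_mul (h.nonneg n),
      mul_left_comm]

lemma toReal_lintegral_laplaceGap (h : IsPosLaw q) (hα : α < 1) :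
    (∫⁻ s in Ioi (0 : ℝ), ENNReal.ofReal (laplaceGap q α s)).toReal =
      Real.Gamma (1 - α) * ∑' n : ℕ, q n * boxCox α n := by
  have hΓ := Real.Gamma_pos_of_pos (sub_pos.2 hα)
  rw [h.lintegral_laplaceGap hα, ENNReal.tsum_toReal_eq fun n => ENNReal.ofReal_ne_top]
  simp only [ENNReal.toReal_ofReal (mul_nonneg hΓ.le (h.mul_boxCox_nonneg _)), tsum_mul_left]

lemma summable_mul_boxCox (h : IsPosLaw q) (hα : α < 1)
    (hfin : ∫⁻ s in Ioi (0 : ℝ), ENNReal.ofReal (laplaceGap q α s) ≠ ∞) :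
    Summable fun n : ℕ => q n * boxCox α n := by
  have hΓ := Real.Gamma_pos_of_pos (sub_pos.2 hα)
  rw [h.lintegral_laplaceGap hα] at hfin
  have hsum := ENNReal.summable_toReal hfin
  simp only [ENNReal.toReal_ofReal (mul_nonneg hΓ.le (h.mul_boxCox_nonneg _))] at hsum
  exact (summable_mul_left_iff hΓ.ne').1 hsum

lemma tsum_rpow_mul (h : IsPosLaw q) (hα : α ≠ 0)
    (hsum : Summable fun n : ℕ => q n * boxCox α n) :
    ∑' n : ℕ, (n : ℝ) ^ α * q n = 1 + α * ∑' n : ℕ, q n * boxCox α n := by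
  refine ((h.hasSum.add (hsum.hasSum.mul_left α)).congr_fun fun n => ?_).tsum_eq
  rcases n.eq_zero_or_pos with rfl | hn
  · simp [h.zero]
  · rw [rpow_eq_one_add_mul_boxCox hα (Nat.cast_pos.2 hn)]
    ring

lemma tsum_mul_log (h : IsPosLaw q) :
    ∑' n : ℕ, q n * Real.log n = ∑' n : ℕ, q n * boxCox 0 n := by
  congr 1 with n
  rcases n.eq_zero_or_pos with rfl | hn
  · simp [h.zero]
  · rw [boxCox_zero_left (Nat.cast_pos.2 hn)]

end IsPosLaw

end LaplaceGap

section StrictComparison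

lemma setLIntegral_lt_setLIntegral_of_continuousOn {X : Type*} [TopologicalSpace X]
    [MeasurableSpace X] [OpensMeasurableSpace X] {μ : Measure X} [μ.IsOpenPosMeasure] {U : Set X}
    (hU : IsOpen U) {f g : X → ℝ≥0∞} (hf : ContinuousOn f U) (hg : ContinuousOn g U)
    (hle : ∀ x ∈ U, f x ≤ g x) (hlt : ∃ x ∈ U, f x < g x) (hfin : ∫⁻ x in U, f x ∂μ ≠ ∞) :
    ∫⁻ x in U, f x ∂μ < ∫⁻ x in U, g x ∂μ := by
  refine (setLIntegral_mono' hU.measurableSet hle).lt_of_not_ge fun hge => ?_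
  have hae : f =ᵐ[μ.restrict U] g :=
    ae_eq_of_ae_le_of_lintegral_le (ae_restrict_of_forall_mem hU.measurableSet hle) hfin
      (hg.aemeasurable hU.measurableSet) hge
  obtain ⟨x, hx, hfgx⟩ := hlt
  exact hfgx.ne (Measure.eqOn_open_of_ae_eq hae hU hf hg hx)

variable {q₁ q₂ : ℕ → ℝ} {α : ℝ}

lemma laplaceGap_le_laplaceGap {s : ℝ} (hs : 0 < s)
    (hle : genFun q₁ (Real.exp (-s)) ≤ genFun q₂ (Real.exp (-s))) :
    laplaceGap q₂ α s ≤ laplaceGap q₁ α s :=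
  mul_le_mul_of_nonneg_left (sub_le_sub_left hle _) (Real.rpow_nonneg hs.le _)

lemma laplaceGap_lt_laplaceGap {s : ℝ} (hs : 0 < s)
    (hlt : genFun q₁ (Real.exp (-s)) < genFun q₂ (Real.exp (-s))) :
    laplaceGap q₂ α s < laplaceGap q₁ α s :=
  mul_lt_mul_of_pos_left (sub_lt_sub_left hlt _) (Real.rpow_pos_of_pos hs _)

lemma IsPosLaw.lintegral_laplaceGap_lt (h₁ : IsPosLaw q₁) (h₂ : IsPosLaw q₂)
    (hle : ∀ z ∈ Ioo (0 : ℝ) 1, genFun q₁ z ≤ genFun q₂ z)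
    (hlt : ∃ z ∈ Ioo (0 : ℝ) 1, genFun q₁ z < genFun q₂ z)
    (hfin : ∫⁻ s in Ioi (0 : ℝ), ENNReal.ofReal (laplaceGap q₁ α s) ≠ ∞) :
    ∫⁻ s in Ioi (0 : ℝ), ENNReal.ofReal (laplaceGap q₂ α s) <
      ∫⁻ s in Ioi (0 : ℝ), ENNReal.ofReal (laplaceGap q₁ α s) := by
  have hcont {q : ℕ → ℝ} (h : IsPosLaw q) :
      ContinuousOn (fun s => ENNReal.ofReal (laplaceGap q α s)) (Ioi 0) :=
    ENNReal.continuous_ofReal.comp_continuousOn h.continuousOn_laplaceGap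
  have hgap : ∀ s ∈ Ioi (0 : ℝ),
      ENNReal.ofReal (laplaceGap q₂ α s) ≤ ENNReal.ofReal (laplaceGap q₁ α s) := fun s hs =>
    ENNReal.ofReal_le_ofReal (laplaceGap_le_laplaceGap hs (hle _ (exp_neg_mem_Ioo hs)))
  refine setLIntegral_lt_setLIntegral_of_continuousOn isOpen_Ioi (hcont h₂) (hcont h₁) hgap ?_
    (ne_top_of_le_ne_top hfin (setLIntegral_mono' measurableSet_Ioi hgap))
  obtain ⟨z, hz, hzlt⟩ := hlt
  have hs : 0 < -Real.log z := neg_pos.2 (Real.log_neg hz.1 hz.2)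
  refine ⟨-Real.log z, hs, (ENNReal.ofReal_lt_ofReal_iff_of_nonneg (h₂.laplaceGap_nonneg hs)).2 ?_⟩
  exact laplaceGap_lt_laplaceGap hs (by rwa [neg_neg, Real.exp_log hz.1])

lemma IsPosLaw.tsum_mul_boxCox_lt (h₁ : IsPosLaw q₁) (h₂ : IsPosLaw q₂) (hα : α < 1)
    (hle : ∀ z ∈ Ioo (0 : ℝ) 1, genFun q₁ z ≤ genFun q₂ z)
    (hlt : ∃ z ∈ Ioo (0 : ℝ) 1, genFun q₁ z < genFun q₂ z)
    (hfin : ∫⁻ s in Ioi (0 : ℝ), ENNReal.ofReal (laplaceGap q₁ α s) ≠ ∞) :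
    ∑' n : ℕ, q₂ n * boxCox α n < ∑' n : ℕ, q₁ n * boxCox α n := by
  have hint := ENNReal.toReal_strict_mono hfin (h₁.lintegral_laplaceGap_lt h₂ hle hlt hfin)
  rw [h₁.toReal_lintegral_laplaceGap hα, h₂.toReal_lintegral_laplaceGap hα] at hint
  exact lt_of_mul_lt_mul_left hint (Real.Gamma_pos_of_pos (sub_pos.2 hα)).le

end StrictComparison

namespace IsTreeSizeLaw

section Finiteness

variable {p q : ℕ → ℝ} {α s : ℝ}

lemma laplaceGap_le (h : IsTreeSizeLaw p q) (hs : 0 < s) :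
    laplaceGap q α s ≤ √(2 / p 0) * (Real.exp (-s) * s ^ (1 / 2 - α - 1)) := by
  have hp0 := h.offspring_zero_pos
  have hle : 1 - Real.exp (-s) ≤ s := by linarith [Real.add_one_le_exp (-s)]
  calc laplaceGap q α s
      ≤ s ^ (-α - 1) * (Real.exp (-s) * √(2 / p 0 * (1 - Real.exp (-s)))) :=
        mul_le_mul_of_nonneg_left (h.sub_genFun_le_mul_sqrt (exp_neg_mem_Ioo hs))
          (Real.rpow_nonneg hs.le _)
    _ ≤ s ^ (-α - 1) * (Real.exp (-s) * √(2 / p 0 * s)) := by gcongr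
    _ = √(2 / p 0) * (Real.exp (-s) * s ^ (1 / 2 - α - 1)) := by
        rw [Real.sqrt_mul (by positivity), Real.sqrt_eq_rpow s,
          show 1 / 2 - α - 1 = (-α - 1) + 1 / 2 by ring, Real.rpow_add hs]
        ring

lemma lintegral_laplaceGap_ne_top (h : IsTreeSizeLaw p q) (hα : α < 1 / 2) :
    ∫⁻ s in Ioi (0 : ℝ), ENNReal.ofReal (laplaceGap q α s) ≠ ∞ := by
  have hGamma := (Real.GammaIntegral_convergent (sub_pos.2 hα)).const_mul √(2 / p 0)
  refine ne_top_of_le_ne_top hGamma.lintegral_lt_top.ne ?_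
  exact setLIntegral_mono' measurableSet_Ioi fun s hs =>
    ENNReal.ofReal_le_ofReal (h.laplaceGap_le hs)

lemma tsum_rpow_mul (h : IsTreeSizeLaw p q) (hα : α ≠ 0) (hα' : α < 1 / 2) :
    ∑' n : ℕ, (n : ℝ) ^ α * q n = 1 + α * ∑' n : ℕ, q n * boxCox α n :=
  h.isPosLaw.tsum_rpow_mul hα
    (h.isPosLaw.summable_mul_boxCox (by linarith) (h.lintegral_laplaceGap_ne_top hα'))

end Finiteness

variable {p₁ p₂ q₁ q₂ : ℕ → ℝ}

lemma tsum_mul_boxCox_lt (h₁ : IsTreeSizeLaw p₁ q₁) (h₂ : IsTreeSizeLaw p₂ q₂)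
    (hΦ : ∀ t ∈ Ioo (0 : ℝ) 1, genFun p₁ t ≤ genFun p₂ t)
    (hΦstrict : ∃ t ∈ Ioo (0 : ℝ) 1, genFun p₁ t < genFun p₂ t) {α : ℝ} (hα : α < 1 / 2) :
    ∑' n : ℕ, q₂ n * boxCox α n < ∑' n : ℕ, q₁ n * boxCox α n := by
  refine h₁.isPosLaw.tsum_mul_boxCox_lt h₂.isPosLaw (by linarith) (fun z hz => ?_) ?_
    (h₁.lintegral_laplaceGap_ne_top hα)
  · exact h₁.genFun_le_genFun h₂ hz (hΦ _ (h₁.isPosLaw.genFun_mem_Ioo hz))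
  · obtain ⟨t, ht, htlt⟩ := hΦstrict
    obtain ⟨z, hz, rfl⟩ := h₁.isPosLaw.exists_genFun_eq ht
    exact ⟨z, hz, h₁.genFun_lt_genFun h₂ hz htlt⟩

end IsTreeSizeLaw

theorem stmt9_general {p₁ p₂ q₁ q₂ : ℕ → ℝ}
    (h₁ : IsTreeSizeLaw p₁ q₁) (h₂ : IsTreeSizeLaw p₂ q₂)
    (hΦ : ∀ t ∈ Ioo (0 : ℝ) 1, genFun p₁ t ≤ genFun p₂ t)
    (hΦstrict : ∃ t ∈ Ioo (0 : ℝ) 1, genFun p₁ t < genFun p₂ t) :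
    (∀ α : ℝ, α < 0 → ∑' n : ℕ, (n : ℝ) ^ α * q₁ n < ∑' n : ℕ, (n : ℝ) ^ α * q₂ n) ∧
    (∀ α : ℝ, 0 < α → α < 1 / 2 →
      ∑' n : ℕ, (n : ℝ) ^ α * q₂ n < ∑' n : ℕ, (n : ℝ) ^ α * q₁ n) ∧
    ∑' n : ℕ, q₂ n * Real.log n < ∑' n : ℕ, q₁ n * Real.log n := by
  have hboxCox {α : ℝ} (hα : α < 1 / 2) :
      ∑' n : ℕ, q₂ n * boxCox α n < ∑' n : ℕ, q₁ n * boxCox α n :=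
    h₁.tsum_mul_boxCox_lt h₂ hΦ hΦstrict hα
  refine ⟨fun α hneg => ?_, fun α hpos hα => ?_, ?_⟩
  · have hα : α < 1 / 2 := hneg.trans one_half_pos
    rw [h₁.tsum_rpow_mul hneg.ne hα, h₂.tsum_rpow_mul hneg.ne hα]
    exact add_lt_add_right (mul_lt_mul_of_neg_left (hboxCox hα) hneg) 1
  · rw [h₁.tsum_rpow_mul hpos.ne' hα, h₂.tsum_rpow_mul hpos.ne' hα]
    exact add_lt_add_right (mul_lt_mul_of_pos_left (hboxCox hα) hpos) 1
  · rw [h₁.isPosLaw.tsum_mul_log, h₂.isPosLaw.tsum_mul_log]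
    exact hboxCox one_half_pos

/-- Theorem 6.7 of the paper. If two critical offspring distributions with
variances in `(0,∞)` satisfy `Φ₁ ≤ Φ₂` on `(0,1)` with strict inequality at some point, then
`μ₁(α) < μ₂(α)` for `α < 0`, `μ₁(α) > μ₂(α)` for `0 < α < 1/2`, and `μ₁' > μ₂'`. -/
theorem stmt9
    (p₁ p₂ : ℕ → ℝ) (hp₁ : ∀ k, 0 ≤ p₁ k) (hp₂ : ∀ k, 0 ≤ p₂ k)
    (hpsum₁ : ∑' k, p₁ k = 1) (hpsum₂ : ∑' k, p₂ k = 1)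
    (hcrit₁ : ∑' k : ℕ, (k : ℝ) * p₁ k = 1) (hcrit₂ : ∑' k : ℕ, (k : ℝ) * p₂ k = 1)
    (hσfin₁ : Summable (fun k : ℕ => (k : ℝ) * ((k : ℝ) - 1) * p₁ k))
    (hσfin₂ : Summable (fun k : ℕ => (k : ℝ) * ((k : ℝ) - 1) * p₂ k))
    (hσpos₁ : 0 < ∑' k : ℕ, (k : ℝ) * ((k : ℝ) - 1) * p₁ k)
    (hσpos₂ : 0 < ∑' k : ℕ, (k : ℝ) * ((k : ℝ) - 1) * p₂ k)
    (q₁ q₂ : ℕ → ℝ)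
    (hq₁0 : q₁ 0 = 0) (hq₂0 : q₂ 0 = 0)
    (hq₁nn : ∀ n, 0 ≤ q₁ n) (hq₂nn : ∀ n, 0 ≤ q₂ n)
    (hq₁sum : ∑' n, q₁ n = 1) (hq₂sum : ∑' n, q₂ n = 1)
    (hfix₁ : ∀ z ∈ Set.Icc (0:ℝ) 1,
      (∑' n, q₁ n * z ^ n) = z * ∑' k, p₁ k * (∑' n, q₁ n * z ^ n) ^ k)
    (hfix₂ : ∀ z ∈ Set.Icc (0:ℝ) 1,
      (∑' n, q₂ n * z ^ n) = z * ∑' k, p₂ k * (∑' n, q₂ n * z ^ n) ^ k)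
    (hΦ : ∀ t ∈ Set.Ioo (0:ℝ) 1, (∑' k, p₁ k * t ^ k) ≤ ∑' k, p₂ k * t ^ k)
    (hΦstrict : ∃ t₀ ∈ Set.Ioo (0:ℝ) 1, (∑' k, p₁ k * t₀ ^ k) < ∑' k, p₂ k * t₀ ^ k) :
    (∀ α : ℝ, α < 0 →
      (∑' n : ℕ, (n : ℝ) ^ α * q₁ n) < ∑' n : ℕ, (n : ℝ) ^ α * q₂ n) ∧
    (∀ α : ℝ, 0 < α → α < 1/2 →
      (∑' n : ℕ, (n : ℝ) ^ α * q₂ n) < ∑' n : ℕ, (n : ℝ) ^ α * q₁ n) ∧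
    ((∑' n : ℕ, q₂ n * Real.log n) < ∑' n : ℕ, q₁ n * Real.log n) :=
  stmt9_general ⟨hp₁, hq₁nn, hq₁sum, hfix₁⟩ ⟨hp₂, hq₂nn, hq₂sum, hfix₂⟩ hΦ hΦstrict
end
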